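/- Let Γ be a distance-regular graph with classical parameters (D, b, α, β), D ≥ 4, and intersection numbers a₁ = 0 and a₂ ≠ 0. Fix vertices x, y with ∂(x,y) = 3, set C = {z ∈ Γ₃(x) : B(x,z) = B(x,y)} and Δ = [x,C] = {v ∈ X : ∃ z ∈ C with ∂(x,v)+∂(v,z)=∂(x,z)}. Let x = x₀, x₁, x₂, x₃ be a sequence of vertices in Δ with ∂(x,x_j) = j and ∂(x_{j−1},x_j) = 1 for 1 ≤ j ≤ 3. Then |Γ₁(x_i) ∩ Δ| ≥ |Γ₁(x_{i+1}) ∩ Δ| for 0 ≤ i ≤ 2, and consequently |Γ₁(x_i) ∩ Δ| = a₃ + c₃ for 0 ≤ i ≤ 3. -/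

import Mathlib

/-!
Common definitions: distance-regular graphs (via an intersection-number function `p`),
classical parameters, and the sets `B(x,y)`, `A(x,y)`, `C(x,y)`.
The distance `∂` is `SimpleGraph.dist`.
-/

variable {V : Type*}

/-- `Γ` is distance-regular with intersection numbers `p h i j = p^h_{ij}`
(for indices up to the diameter `D`). -/
def SimpleGraph.IsDistRegularWith (G : SimpleGraph V) (D : ℕ) (p : ℕ → ℕ → ℕ → ℕ) : Prop :=
  ∀ h i j : ℕ, h ≤ D → i ≤ D → j ≤ D → ∀ x y : V, G.dist x y = h →
    {z : V | G.dist x z = i ∧ G.dist y z = j}.ncard = p h i j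

/-- The Gaussian bracket `[i] = 1 + b + b² + ⋯ + b^{i-1}`. -/
def gaussBracket (b : ℝ) (i : ℕ) : ℝ := ∑ k ∈ Finset.range i, b ^ k

/-- A distance-regular graph with intersection numbers `p` has classical parameters
`(D, b, α, β)`: `b ∉ {0, -1}`, `c_i = [i](1 + α[i-1])` and `b_i = ([D]-[i])(β - α[i])`
for `0 ≤ i ≤ D`, where `c_i = p^i_{1,i-1}` and `b_i = p^i_{1,i+1}`. -/
def HasClassicalParams (D : ℕ) (p : ℕ → ℕ → ℕ → ℕ) (b α β : ℝ) : Prop :=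
  b ≠ 0 ∧ b ≠ -1 ∧
    (∀ i ≤ D, (p i 1 (i - 1) : ℝ) = gaussBracket b i * (1 + α * gaussBracket b (i - 1))) ∧
    (∀ i ≤ D, (p i 1 (i + 1) : ℝ) =
      (gaussBracket b D - gaussBracket b i) * (β - α * gaussBracket b i))

/-- `B(x,y) = Γ₁(x) ∩ Γ_{∂(x,y)+1}(y)`. -/
def Bset (G : SimpleGraph V) (x y : V) : Set V :=
  {v | G.dist x v = 1 ∧ G.dist y v = G.dist x y + 1}

/-- `A(x,y) = Γ₁(x) ∩ Γ_{∂(x,y)}(y)`. -/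
def Aset (G : SimpleGraph V) (x y : V) : Set V :=
  {v | G.dist x v = 1 ∧ G.dist y v = G.dist x y}

/-- `C(x,y) = Γ₁(x) ∩ Γ_{∂(x,y)-1}(y)`. -/
def Cset (G : SimpleGraph V) (x y : V) : Set V :=
  {v | G.dist x v = 1 ∧ G.dist y v = G.dist x y - 1}

/-- `C = {z ∈ Γ₃(x) : B(x,z) = B(x,y)}`. -/
def Cclass (G : SimpleGraph V) (x y : V) : Set V :=
  {z | G.dist x z = 3 ∧ Bset G x z = Bset G x y}

/-- `Δ = [x, C] = {v : ∃ z ∈ C, ∂(x,v) + ∂(v,z) = ∂(x,z)}`. -/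
def Delta (G : SimpleGraph V) (x y : V) : Set V :=
  {v | ∃ z ∈ Cclass G x y, G.dist x v + G.dist v z = G.dist x z}

/-!
Let `A` be the adjacency matrix and for a vertex `x` let `Dₓ` be the diagonal
matrix with `(u, u)` entry `b ^ (-∂(x, u))`. Classical parameters make `c i` and `b i` quadratic
polynomials in `b ^ i`, and by a formal computation `A` and `Dₓ` then satisfy an Askey–Wilson
relation on the vectors that depend only on the distance to `x`. Summed over `x`, the product of the
`(u, u)` and `(v, v)` entries of `Dₓ` is an affine function of `b ^ (-∂(u, v))`, so a trace argument
extends a consequence of this relation to all vectors: the tridiagonal relation, that is,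
`A² Dₓ - (b + b⁻¹) A Dₓ A + Dₓ A² - γ (A Dₓ + Dₓ A) - ρ Dₓ` commutes with `A`. Comparing entries
gives Terwilliger's balanced set condition for the pairs at distance `2` and `3`, which together
with `a₁ = 0` excludes parallelograms of length `3` and `4`.

Hence `Δ` is closed under steps from any of its vertices that do not lead away from `x`, and, for an
edge `s t` of `Δ` leading away from `x`, a neighbour of `s` outside `Δ` is never at distance `2`
from a neighbour of `t` inside `Δ`. Every neighbour of `s` outside `Δ` is at distance `2` from `t`,
and conversely, so counting the pairs at distance `2` shows that `t` has at least as many neighbours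
outside `Δ` as `s`. Along the path the number of neighbours inside `Δ` therefore decreases weakly,
from at most `a₃ + c₃` at `x₀` to at least `a₃ + c₃` at `x₃`.
-/

section TridiagonalRelation

open Matrix

variable [Fintype V] (A : Matrix V V ℝ)

/-- The operator `X ↦ A²X - βAXA + XA² - γ(AX + XA) - ρX`. A matrix `D` satisfies the first
tridiagonal relation with parameters `β, γ, ρ` when the image of `D` commutes with `A`. -/
def tridiagonalOp (β γ ρ : ℝ) : Module.End ℝ (Matrix V V ℝ) :=
  let L := LinearMap.mulLeft ℝ A
  let R := LinearMap.mulRight ℝ A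
  L * L - β • (L * R) + R * R - γ • (L + R) - ρ • 1

/-- The operator `X ↦ AX - XA`. -/
def commutatorOp : Module.End ℝ (Matrix V V ℝ) :=
  LinearMap.mulLeft ℝ A - LinearMap.mulRight ℝ A

/-- The matrices that vanish on a given subspace of vectors. -/
def matrixAnnihilator (W : Submodule ℝ (V → ℝ)) : Submodule ℝ (Matrix V V ℝ) where
  carrier := {X | ∀ v ∈ W, X *ᵥ v = 0}
  add_mem' hX hY v hv := by rw [add_mulVec, hX v hv, hY v hv, add_zero]
  zero_mem' v _ := zero_mulVec v
  smul_mem' c X hX v hv := by rw [smul_mulVec, hX v hv, smul_zero]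

variable {A} {β γ ρ : ℝ} {X Y : Matrix V V ℝ}

theorem commutatorOp_apply : commutatorOp A X = A * X - X * A := rfl

theorem tridiagonalOp_apply : tridiagonalOp A β γ ρ X =
    A * (A * X) - β • (A * (X * A)) + X * A * A - γ • (A * X + X * A) - ρ • X := rfl

theorem trace_commutatorOp_mul :
    (commutatorOp A X * Y).trace = -(X * commutatorOp A Y).trace := by
  simp only [commutatorOp_apply, sub_mul, mul_sub, trace_sub, mul_assoc, trace_mul_comm A (X * Y)]
  ring

theorem trace_tridiagonalOp_mul :
    (tridiagonalOp A β γ ρ X * Y).trace = (X * tridiagonalOp A β γ ρ Y).trace := by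
  have cycle (Z : Matrix V V ℝ) : (A * Z).trace = (Z * A).trace := trace_mul_comm A Z
  simp only [tridiagonalOp_apply, sub_mul, mul_sub, add_mul, mul_add, smul_mul_assoc,
    mul_smul_comm, trace_sub, trace_add, trace_smul, cycle, mul_assoc]
  ring

theorem transpose_commutatorOp (hA : A.IsSymm) :
    (commutatorOp A X)ᵀ = -commutatorOp A Xᵀ := by
  simp only [commutatorOp_apply, transpose_sub, transpose_mul, hA.eq, neg_sub]

theorem transpose_tridiagonalOp (hA : A.IsSymm) :
    (tridiagonalOp A β γ ρ X)ᵀ = tridiagonalOp A β γ ρ Xᵀ := by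
  simp only [tridiagonalOp_apply, transpose_sub, transpose_add, transpose_smul, transpose_mul,
    hA.eq, mul_assoc]
  abel_nf

variable {W : Submodule ℝ (V → ℝ)}

theorem mul_mem_matrixAnnihilator (hX : X ∈ matrixAnnihilator W) :
    A * X ∈ matrixAnnihilator W := fun v hv ↦ by
  rw [← mulVec_mulVec, hX v hv, mulVec_zero]

theorem matrixAnnihilator_mul_mem (hW : ∀ v ∈ W, A *ᵥ v ∈ W) (hX : X ∈ matrixAnnihilator W) :
    X * A ∈ matrixAnnihilator W := fun v hv ↦ by
  rw [← mulVec_mulVec, hX _ (hW v hv)]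

theorem commutatorOp_mem_matrixAnnihilator (hW : ∀ v ∈ W, A *ᵥ v ∈ W)
    (hX : X ∈ matrixAnnihilator W) : commutatorOp A X ∈ matrixAnnihilator W :=
  sub_mem (mul_mem_matrixAnnihilator hX) (matrixAnnihilator_mul_mem hW hX)

theorem tridiagonalOp_mem_matrixAnnihilator (hW : ∀ v ∈ W, A *ᵥ v ∈ W)
    (hX : X ∈ matrixAnnihilator W) : tridiagonalOp A β γ ρ X ∈ matrixAnnihilator W := by
  have hL {Z : Matrix V V ℝ} (hZ : Z ∈ matrixAnnihilator W) := mul_mem_matrixAnnihilator (A := A) hZ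
  have hR {Z : Matrix V V ℝ} (hZ : Z ∈ matrixAnnihilator W) := matrixAnnihilator_mul_mem hW hZ
  have smul {Z : Matrix V V ℝ} (c : ℝ) (hZ : Z ∈ matrixAnnihilator W) :=
    (matrixAnnihilator W).smul_mem c hZ
  exact sub_mem (sub_mem (add_mem (sub_mem (hL (hL hX)) (smul β (hL (hR hX)))) (hR (hR hX)))
    (smul γ (add_mem (hL hX) (hR hX)))) (smul ρ hX)

theorem eq_zero_of_sum_trace_mul_self_nonneg {ι : Type*} [Fintype ι] {N : ι → Matrix V V ℝ}
    (hskew : ∀ i, (N i)ᵀ = -N i) (hsum : 0 ≤ ∑ i, (N i * N i).trace) (i : ι) : N i = 0 := by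
  have htrace (j : ι) : (N j * N j).trace = -(N j * (N j)ᴴ).trace := by
    rw [conjTranspose_eq_transpose_of_trivial, hskew, mul_neg, trace_neg, neg_neg]
  have hnonneg (j : ι) : 0 ≤ (N j * (N j)ᴴ).trace :=
    (posSemidef_self_mul_conjTranspose (N j)).trace_nonneg
  simp only [htrace, Finset.sum_neg_distrib, Left.nonneg_neg_iff] at hsum
  have hzero := (Finset.sum_eq_zero_iff_of_nonneg fun j _ ↦ hnonneg j).1
    (hsum.antisymm (Finset.sum_nonneg fun j _ ↦ hnonneg j)) i (Finset.mem_univ i)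
  exact trace_mul_conjTranspose_self_eq_zero_iff.1 hzero

variable [DecidableEq V]

theorem commutatorOp_tridiagonalOp_one : commutatorOp A (tridiagonalOp A β γ ρ 1) = 0 := by
  simp only [commutatorOp_apply, tridiagonalOp_apply, mul_one, one_mul, mul_sub, sub_mul, mul_add,
    add_mul, smul_mul_assoc, mul_smul_comm, mul_assoc, sub_self]

theorem sum_trace_map_diagonal_mul_diagonal {F : V → V → ℝ} {c c' : ℝ}
    (hF : ∀ a e, ∑ x, F x a * F x e = c * F e a + c')
    (Ψ : Matrix V V ℝ →ₗ[ℝ] Matrix V V ℝ) :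
    ∑ x, (Ψ (diagonal (F x)) * diagonal (F x)).trace =
      c * ∑ w, Ψ (diagonal (F w)) w w + c' * (Ψ 1).trace := by
  have expand (f : V → ℝ) (e : V) :
      Ψ (diagonal f) e e = ∑ a, f a * Ψ (diagonal (Pi.single a 1)) e e := by
    have : diagonal f = ∑ a, f a • diagonal (Pi.single a (1 : ℝ)) := by
      ext i j
      simp [Matrix.sum_apply, diagonal_apply, Pi.single_apply, Finset.sum_ite_eq]
    rw [this, map_sum, Matrix.sum_apply]
    simp only [map_smul, Matrix.smul_apply, smul_eq_mul]
  have expand_one (e : V) : Ψ 1 e e = ∑ a, Ψ (diagonal (Pi.single a 1)) e e := by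
    rw [← diagonal_one, expand]
    simp only [one_mul]
  simp only [Matrix.trace, diag_apply, mul_diagonal, expand_one, expand (F _), Finset.mul_sum,
    Finset.sum_mul]
  rw [Finset.sum_comm, ← Finset.sum_add_distrib]
  refine Finset.sum_congr rfl fun e _ ↦ ?_
  rw [Finset.sum_comm, ← Finset.sum_add_distrib]
  refine Finset.sum_congr rfl fun a _ ↦ ?_
  calc ∑ x, F x a * Ψ (diagonal (Pi.single a 1)) e e * F x e
      = (∑ x, F x a * F x e) * Ψ (diagonal (Pi.single a 1)) e e := by
        rw [Finset.sum_mul]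
        exact Finset.sum_congr rfl fun x _ ↦ by ring
    _ = _ := by rw [hF]; ring

theorem apply_eq_zero_of_mem_matrixAnnihilator {w : V} (hw : Pi.single w 1 ∈ W)
    (hX : X ∈ matrixAnnihilator W) : X w w = 0 := by
  simpa using congr_fun (hX _ hw) w

theorem commute_tridiagonalOp_diagonal (hA : A.IsSymm) {F : V → V → ℝ} {c c' : ℝ}
    (hF : ∀ a e, ∑ x, F x a * F x e = c * F e a + c') {R : Matrix V V ℝ} (hR : Commute A R)
    {W : V → Submodule ℝ (V → ℝ)} (hW : ∀ w, ∀ v ∈ W w, A *ᵥ v ∈ W w)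
    (hbase : ∀ w, Pi.single w 1 ∈ W w)
    (hFR : ∀ w, tridiagonalOp A β γ ρ (diagonal (F w)) - R ∈ matrixAnnihilator (W w)) (x : V) :
    Commute A (tridiagonalOp A β γ ρ (diagonal (F x))) := by
  let Φ : Module.End ℝ (Matrix V V ℝ) := tridiagonalOp A β γ ρ
  let N (x : V) := commutatorOp A (Φ (diagonal (F x)))
  let Ψ : Module.End ℝ (Matrix V V ℝ) := Φ * commutatorOp A * commutatorOp A * Φ
  have hN (x : V) : (N x)ᵀ = -N x := by
    rw [transpose_commutatorOp hA, transpose_tridiagonalOp hA, diagonal_transpose]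
  have htrace (x : V) :
      (N x * N x).trace = -(Ψ (diagonal (F x)) * diagonal (F x)).trace :=
    trace_commutatorOp_mul.trans <| congrArg Neg.neg <| by
      rw [trace_mul_comm]
      exact trace_tridiagonalOp_mul.symm
  have hΨone : Ψ 1 = 0 := by
    change Φ (commutatorOp A (commutatorOp A (Φ 1))) = 0
    rw [commutatorOp_tridiagonalOp_one, map_zero, map_zero]
  have hΨdiag (w : V) : Ψ (diagonal (F w)) w w = 0 := by
    have hcomm : N w ∈ matrixAnnihilator (W w) := by
      have hRzero : commutatorOp A R = 0 := sub_eq_zero.2 hR.eq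
      rw [← sub_zero (N w), ← hRzero, ← map_sub]
      exact commutatorOp_mem_matrixAnnihilator (hW w) (hFR w)
    have hΦ : Φ (commutatorOp A (N w)) ∈ matrixAnnihilator (W w) :=
      tridiagonalOp_mem_matrixAnnihilator (hW w) (commutatorOp_mem_matrixAnnihilator (hW w) hcomm)
    exact apply_eq_zero_of_mem_matrixAnnihilator (hbase w) hΦ
  have hsum : ∑ x, (N x * N x).trace = 0 := by
    simp only [htrace, Finset.sum_neg_distrib, sum_trace_map_diagonal_mul_diagonal hF, hΨone,
      hΨdiag, Finset.sum_const_zero, trace_zero, mul_zero, add_zero, neg_zero]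
  exact sub_eq_zero.1 (eq_zero_of_sum_trace_mul_self_nonneg hN hsum.ge x)

end TridiagonalRelation

section Balance

open Matrix
variable [Fintype V] [DecidableEq V] (A : Matrix V V ℝ) (d : V → V → ℕ) (F : V → V → ℝ)

/-- The matrices whose `(y, z)` entry depends on `d y z` only, for a "distance" `d`. -/
def radialMatrices : Submodule ℝ (Matrix V V ℝ) where
  carrier := {M | ∃ r : ℕ → ℝ, ∀ y z, M y z = r (d y z)}
  add_mem' := fun ⟨r, hr⟩ ⟨s, hs⟩ ↦ ⟨r + s, fun y z ↦ by simp [hr, hs]⟩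
  zero_mem' := ⟨0, fun _ _ ↦ rfl⟩
  smul_mem' := fun c _ ⟨r, hr⟩ ↦ ⟨c • r, fun y z ↦ by simp [hr]⟩

/-- The families of matrices `Y x` whose `(y, z)` entry is a multiple of `F x z - F x y`, the
factor depending on `d y z` only. -/
def radialDifferences : Submodule ℝ (V → Matrix V V ℝ) where
  carrier := {Y | ∃ r : ℕ → ℝ, ∀ x y z, Y x y z = r (d y z) * (F x z - F x y)}
  add_mem' := fun ⟨r, hr⟩ ⟨s, hs⟩ ↦ ⟨r + s, fun x y z ↦ by simp [hr, hs, add_mul]⟩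
  zero_mem' := ⟨0, fun _ _ _ ↦ by simp⟩
  smul_mem' := fun c _ ⟨r, hr⟩ ↦ ⟨c • r, fun x y z ↦ by simp [hr, mul_assoc]⟩

/-- The family `x ↦ M Dₓ A - A Dₓ M` with `Dₓ = diag (F x)`. Its entries are the differences of
sums that occur in Terwilliger's balanced set condition. -/
def balanceMap : Matrix V V ℝ →ₗ[ℝ] V → Matrix V V ℝ :=
  LinearMap.pi fun x ↦ LinearMap.mulRight ℝ (diagonal (F x) * A)
    - LinearMap.mulLeft ℝ (A * diagonal (F x))

variable {A d F} {β γ ρ : ℝ} {M : Matrix V V ℝ}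

theorem balanceMap_apply (x : V) :
    balanceMap A F M x = M * (diagonal (F x) * A) - A * diagonal (F x) * M := rfl

theorem commutator_mem_radialDifferences (hM : M ∈ radialMatrices d) :
    (fun x ↦ M * diagonal (F x) - diagonal (F x) * M) ∈ radialDifferences d F := by
  obtain ⟨r, hr⟩ := hM
  refine ⟨r, fun x y z ↦ ?_⟩
  simp only [Matrix.sub_apply, mul_diagonal, diagonal_mul, hr]
  ring

theorem balanceMap_self : balanceMap A F A = 0 := by
  ext1 x
  rw [balanceMap_apply, mul_assoc, sub_self, Pi.zero_apply]

theorem balanceMap_sq (h : ∀ x, Commute A (tridiagonalOp A β γ ρ (diagonal (F x)))) :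
    (β + 1) • balanceMap A F (A ^ 2) = fun x ↦
      ((A ^ 3 * diagonal (F x) - diagonal (F x) * A ^ 3)
        - γ • (A ^ 2 * diagonal (F x) - diagonal (F x) * A ^ 2)
        - ρ • (A * diagonal (F x) - diagonal (F x) * A)) := by
  ext1 x
  have hx := (h x).eq
  rw [← sub_eq_zero] at hx ⊢
  rw [Pi.smul_apply, balanceMap_apply, ← neg_eq_zero, ← hx, tridiagonalOp_apply]
  simp only [pow_succ, pow_zero, one_mul, mul_sub, sub_mul, mul_add, add_mul, smul_mul_assoc,
    mul_smul_comm, mul_assoc, smul_sub, smul_add, add_smul, one_smul]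
  abel

theorem balanceMap_cube (h : ∀ x, Commute A (tridiagonalOp A β γ ρ (diagonal (F x)))) :
    β • balanceMap A F (A ^ 3) = fun x ↦
      ((A ^ 4 * diagonal (F x) - diagonal (F x) * A ^ 4)
        - γ • ((A ^ 3 * diagonal (F x) - diagonal (F x) * A ^ 3) + balanceMap A F (A ^ 2) x)
        - ρ • (A ^ 2 * diagonal (F x) - diagonal (F x) * A ^ 2)) := by
  ext1 x
  have hx : A * (A * tridiagonalOp A β γ ρ (diagonal (F x))
      - tridiagonalOp A β γ ρ (diagonal (F x)) * A)
      + (A * tridiagonalOp A β γ ρ (diagonal (F x))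
      - tridiagonalOp A β γ ρ (diagonal (F x)) * A) * A = 0 := by
    rw [(h x).eq, sub_self, mul_zero, zero_mul, add_zero]
  rw [← sub_eq_zero, Pi.smul_apply, balanceMap_apply, balanceMap_apply, ← neg_eq_zero, ← hx,
    tridiagonalOp_apply]
  simp only [pow_succ, pow_zero, one_mul, mul_sub, sub_mul, mul_add, add_mul, smul_mul_assoc,
    mul_smul_comm, mul_assoc, smul_sub, smul_add]
  abel

theorem balanceMap_pow_mem_radialDifferences
    (h : ∀ x, Commute A (tridiagonalOp A β γ ρ (diagonal (F x)))) (hβ : β ≠ 0) (hβ' : β + 1 ≠ 0)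
    (hA : ∀ k, A ^ k ∈ radialMatrices d) {k : ℕ} (hk : k ≤ 3) :
    balanceMap A F (A ^ k) ∈ radialDifferences d F := by
  have hcomm (k : ℕ) := commutator_mem_radialDifferences (F := F) (hA k)
  have hcomm_one := commutator_mem_radialDifferences (F := F) (pow_one A ▸ hA 1)
  have hsmul (r : ℝ) {Y : V → Matrix V V ℝ} (hY : Y ∈ radialDifferences d F) :=
    (radialDifferences d F).smul_mem r hY
  have hsq : balanceMap A F (A ^ 2) ∈ radialDifferences d F := by
    rw [← Submodule.smul_mem_iff _ hβ', balanceMap_sq h]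
    exact sub_mem (sub_mem (hcomm 3) (hsmul γ (hcomm 2))) (hsmul ρ hcomm_one)
  interval_cases k
  · convert hsmul (-1) hcomm_one using 1
    ext1 x
    simp [balanceMap_apply]
  · rw [pow_one, balanceMap_self]
    exact zero_mem _
  · exact hsq
  · rw [← Submodule.smul_mem_iff _ hβ, balanceMap_cube h]
    exact sub_mem (sub_mem (hcomm 4) (hsmul γ (add_mem (hcomm 3) hsq))) (hsmul ρ (hcomm 2))

end Balance

section AskeyWilson

/-- The operator on sequences with coefficients `c i`, `k - c i - e i`, `e i` at
`f (i - 1)`, `f i`, `f (i + 1)`. It describes the adjacency operator of a distance-regular graph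
of valency `k` on functions of the distance to a fixed vertex. -/
def threeTermOp (k : ℝ) (c e f : ℤ → ℝ) (i : ℤ) : ℝ :=
  k * f i + c i * (f (i - 1) - f i) + e i * (f (i + 1) - f i)

variable {b c₀ c₁ c₂ e₀ e₁ : ℝ} (k : ℝ) {c e : ℤ → ℝ}

theorem exists_threeTermOp_zpow (hb : b ≠ 0)
    (hc : ∀ i, c i = c₀ + c₁ * b ^ i + c₂ * (b ^ i) ^ 2)
    (he : ∀ i, e i = e₀ + e₁ * b ^ i + b * c₂ * (b ^ i) ^ 2) :
    ∃ t s : ℝ, ∀ i : ℤ, threeTermOp k c e (fun j ↦ b⁻¹ ^ j) i = t * b⁻¹ ^ i + s := by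
  refine ⟨k + c₀ * (b - 1) + e₀ * (b⁻¹ - 1), c₁ * (b - 1) + e₁ * (b⁻¹ - 1), fun i ↦ ?_⟩
  have hbi : b ^ i ≠ 0 := zpow_ne_zero i hb
  simp only [threeTermOp, hc, he, inv_zpow, zpow_add₀ hb, zpow_sub₀ hb, zpow_one]
  field_simp
  ring

-- The coefficients at `f (i ± 2)` cancel because `θ i = b⁻¹ ^ i` satisfies
-- `θ (i - 1) + θ (i + 1) = (b + b⁻¹) * θ i`; `γ` and `ω` are forced by the coefficients at
-- `f (i ± 1)`, and then `ρ` and `η` by the one at `f i`.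
theorem exists_askeyWilson_relation (hb : b ≠ 0)
    (hc : ∀ i, c i = c₀ + c₁ * b ^ i + c₂ * (b ^ i) ^ 2)
    (he : ∀ i, e i = e₀ + e₁ * b ^ i + b * c₂ * (b ^ i) ^ 2) :
    ∃ γ ρ ω η : ℝ, ∀ f : ℤ → ℝ,
      letI L := threeTermOp k c e
      letI θ : ℤ → ℝ := fun j ↦ b⁻¹ ^ j
      L (L (θ * f)) - (b + b⁻¹) • L (θ * L f) + θ * L (L f) - γ • (L (θ * f) + θ * L f)
        - ρ • (θ * f) = ω • L f + η • f := by
  set a₀ := k - c₀ - e₀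
  set a₁ := -c₁ - e₁
  set γ := a₀ * (2 - b - b⁻¹)
  set ω := a₁ * (2 - b - b⁻¹)
  refine ⟨γ, a₀ ^ 2 * (2 - b - b⁻¹) + c₀ * e₀ * (2 - b ^ 2 - b⁻¹ ^ 2) - 2 * γ * a₀, ω,
    2 * a₀ * a₁ * (2 - b - b⁻¹) + (1 - b ^ 2) * (c₀ * e₁ * b⁻¹ + c₁ * e₀)
      + (1 - b⁻¹ ^ 2) * (e₀ * c₁ * b + e₁ * c₀) - 2 * γ * a₁ - ω * a₀, fun f ↦ funext fun i ↦ ?_⟩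
  have hbi : b ^ i ≠ 0 := zpow_ne_zero i hb
  simp only [threeTermOp, Pi.add_apply, Pi.sub_apply, Pi.mul_apply, Pi.smul_apply, smul_eq_mul, hc,
    he, inv_zpow, zpow_add₀ hb, zpow_sub₀ hb, zpow_one, sub_add_cancel, add_sub_cancel_right,
    γ, ω, a₀, a₁]
  field_simp
  ring

open Matrix

variable {k} [Fintype V] [DecidableEq V] {A : Matrix V V ℝ} {d : V → V → ℕ}

/-- The vectors `u ↦ f (d w u)` that are constant on the spheres around `w`. -/
def radialVectors (d : V → V → ℕ) (w : V) : Submodule ℝ (V → ℝ) where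
  carrier := {v | ∃ f : ℤ → ℝ, v = fun u ↦ f (d w u)}
  add_mem' := fun ⟨f, hf⟩ ⟨g, hg⟩ ↦ ⟨f + g, by rw [hf, hg]; rfl⟩
  zero_mem' := ⟨0, rfl⟩
  smul_mem' := fun r _ ⟨f, hf⟩ ↦ ⟨r • f, by rw [hf]; rfl⟩

theorem exists_commute_tridiagonalOp (hA : A.IsSymm) (hd : ∀ w u, d w u = 0 ↔ w = u)
    (hradial : ∀ w (f : ℤ → ℝ), A *ᵥ (fun u ↦ f (d w u)) = fun v ↦ threeTermOp k c e f (d w v))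
    (hb : b ≠ 0) (hc : ∀ i, c i = c₀ + c₁ * b ^ i + c₂ * (b ^ i) ^ 2)
    (he : ∀ i, e i = e₀ + e₁ * b ^ i + b * c₂ * (b ^ i) ^ 2) {r r' : ℝ}
    (hsum : ∀ u v, ∑ x, b⁻¹ ^ d x u * b⁻¹ ^ d x v = r * b⁻¹ ^ d v u + r') :
    ∃ γ ρ : ℝ, ∀ x,
      Commute A (tridiagonalOp A (b + b⁻¹) γ ρ (diagonal fun u ↦ b⁻¹ ^ d x u)) := by
  obtain ⟨γ, ρ, ω, η, hAW⟩ := exists_askeyWilson_relation k hb hc he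
  refine ⟨γ, ρ, commute_tridiagonalOp_diagonal hA hsum (R := ω • A + η • 1)
    (((Commute.refl A).smul_right ω).add_right ((Commute.one_right A).smul_right η))
    (W := radialVectors d) ?_ ?_ ?_⟩
  · rintro w _ ⟨f, rfl⟩
    exact ⟨_, hradial w f⟩
  · refine fun w ↦ ⟨Pi.single 0 1, funext fun u ↦ ?_⟩
    simp only [Pi.single_apply, Int.natCast_eq_zero, hd, eq_comm]
  · rintro w _ ⟨f, rfl⟩
    have hdiag (g : ℤ → ℝ) : diagonal (fun u ↦ b⁻¹ ^ d w u) *ᵥ (fun u ↦ g (d w u)) =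
        fun u ↦ ((fun j : ℤ ↦ b⁻¹ ^ j) * g) (d w u) := by
      ext u
      simp [mulVec_diagonal]
    have h (v : V) := congrFun (hAW f) (d w v)
    ext v
    simp only [tridiagonalOp_apply, sub_mulVec, add_mulVec, smul_mulVec, ← mulVec_mulVec, hradial,
      hdiag, one_mulVec]
    exact sub_eq_zero.2 (h v)

end AskeyWilson

open Finset

theorem dist_triangle_bounds {G : SimpleGraph V} (hG : G.Connected) (u v w : V) :
    (G.dist u w ≤ G.dist u v + G.dist v w ∧ G.dist u v ≤ G.dist u w + G.dist v w ∧
      G.dist v w ≤ G.dist u v + G.dist u w) ∧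
    G.dist v u = G.dist u v ∧ G.dist w u = G.dist u w ∧ G.dist w v = G.dist v w := by
  rw [G.dist_comm (u := v) (v := u), G.dist_comm (u := w) (v := u), G.dist_comm (u := w) (v := v)]
  have huv := hG.dist_triangle (u := u) (v := w) (w := v)
  have hvw := hG.dist_triangle (u := v) (v := u) (w := w)
  rw [G.dist_comm (u := w)] at huv
  rw [G.dist_comm (u := v) (v := u)] at hvw
  exact ⟨⟨hG.dist_triangle, huv, hvw⟩, rfl, rfl, rfl⟩

theorem exists_dist_eq_of_dist_eq_add {G : SimpleGraph V} (hG : G.Connected) {u v : V} {i j : ℕ}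
    (h : G.dist u v = i + j) : ∃ w, G.dist u w = i ∧ G.dist w v = j := by
  obtain ⟨P, hP⟩ := hG.exists_walk_length_eq_dist u v
  have htake := SimpleGraph.dist_le (P.take i)
  have hdrop := SimpleGraph.dist_le (P.drop i)
  have htriangle := hG.dist_triangle (u := u) (v := P.getVert i) (w := v)
  rw [SimpleGraph.Walk.take_length] at htake
  rw [SimpleGraph.Walk.drop_length] at hdrop
  exact ⟨P.getVert i, by omega, by omega⟩

/-- Distance-regular graphs of diameter `D` with intersection numbers `p`. -/
structure IsDistanceRegular (G : SimpleGraph V) (D : ℕ) (p : ℕ → ℕ → ℕ → ℕ) : Prop where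
  connected : G.Connected
  dist_le : ∀ x y, G.dist x y ≤ D
  exists_dist_eq_diam : ∃ x y, G.dist x y = D
  isDistRegularWith : G.IsDistRegularWith D p

/-- The `i`-th distance matrix, with entry `1` at the pairs at distance `i` and `0` elsewhere. -/
noncomputable def distanceMatrix (G : SimpleGraph V) (i : ℕ) : Matrix V V ℝ :=
  .of fun y z ↦ if G.dist y z = i then 1 else 0

theorem distanceMatrix_apply {G : SimpleGraph V} {i : ℕ} {y z : V} :
    distanceMatrix G i y z = if G.dist y z = i then 1 else 0 := rfl

theorem distanceMatrix_isSymm {G : SimpleGraph V} {i : ℕ} : (distanceMatrix G i).IsSymm := by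
  ext y z
  simp only [Matrix.transpose_apply, distanceMatrix_apply, G.dist_comm]

namespace IsDistanceRegular

variable {G : SimpleGraph V} {D : ℕ} {p : ℕ → ℕ → ℕ → ℕ}

theorem exists_dist_eq (hG : IsDistanceRegular G D p) {i : ℕ} (hi : i ≤ D) :
    ∃ x y, G.dist x y = i := by
  obtain ⟨x, y, hxy⟩ := hG.exists_dist_eq_diam
  obtain ⟨w, hxw, -⟩ := exists_dist_eq_of_dist_eq_add hG.connected
    (hxy.trans (Nat.add_sub_of_le hi).symm)
  exact ⟨x, w, hxw⟩

theorem intersection_pos [Finite V] (hG : IsDistanceRegular G D p) {i j : ℕ} (h : i + j ≤ D) :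
    0 < p (i + j) i j := by
  obtain ⟨x, y, hxy⟩ := hG.exists_dist_eq h
  obtain ⟨w, hxw, hwy⟩ := exists_dist_eq_of_dist_eq_add hG.connected hxy
  rw [← hG.isDistRegularWith _ i j h (by omega) (by omega) x y hxy, Set.ncard_pos]
  exact ⟨w, hxw, G.dist_comm.trans hwy⟩

variable [Fintype V]

theorem card_filter (hG : IsDistanceRegular G D p) {h i j : ℕ} (hi : i ≤ D) (hj : j ≤ D)
    {x y : V} (hxy : G.dist x y = h) : #{z | G.dist x z = i ∧ G.dist y z = j} = p h i j := by
  rw [← hG.isDistRegularWith h i j (hxy ▸ hG.dist_le x y) hi hj x y hxy, ← Set.ncard_coe_finset]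
  simp

theorem sum_dist_mul_dist (hG : IsDistanceRegular G D p) (φ ψ : ℕ → ℝ) (w w' : V) :
    ∑ x, φ (G.dist w x) * ψ (G.dist w' x) =
      ∑ ij ∈ range (D + 1) ×ˢ range (D + 1), p (G.dist w w') ij.1 ij.2 * (φ ij.1 * ψ ij.2) := by
  rw [← sum_fiberwise_of_maps_to (t := range (D + 1) ×ˢ range (D + 1))
    (g := fun x ↦ (G.dist w x, G.dist w' x))
    fun x _ ↦ by simp [hG.dist_le]]
  refine sum_congr rfl fun ⟨i, j⟩ hij ↦ ?_
  simp only [mem_product, mem_range, Nat.lt_succ_iff] at hij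
  rw [← hG.card_filter hij.1 hij.2 rfl, ← nsmul_eq_mul, ← sum_const]
  simp only [Prod.mk.injEq]
  refine sum_congr rfl fun x hx ↦ ?_
  rw [(mem_filter.1 hx).2.1, (mem_filter.1 hx).2.2]

theorem mul_mem_radialMatrices (hG : IsDistanceRegular G D p) {M N : Matrix V V ℝ}
    (hM : M ∈ radialMatrices G.dist) (hN : N ∈ radialMatrices G.dist) :
    M * N ∈ radialMatrices G.dist := by
  obtain ⟨r, hr⟩ := hM
  obtain ⟨s, hs⟩ := hN
  refine ⟨fun h ↦ ∑ ij ∈ range (D + 1) ×ˢ range (D + 1), p h ij.1 ij.2 * (r ij.1 * s ij.2),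
    fun y z ↦ ?_⟩
  refine Eq.trans ?_ (hG.sum_dist_mul_dist r s y z)
  simp only [Matrix.mul_apply, hr, hs, G.dist_comm (v := z)]

theorem pow_distanceMatrix_mem_radialMatrices [DecidableEq V] (hG : IsDistanceRegular G D p)
    (i k : ℕ) : distanceMatrix G i ^ k ∈ radialMatrices G.dist := by
  induction k with
  | zero =>
    refine ⟨Pi.single 0 1, fun y z ↦ ?_⟩
    simp only [pow_zero, Matrix.one_apply, Pi.single_apply, hG.connected.dist_eq_zero_iff]
  | succ k ih =>
    exact pow_succ (distanceMatrix G i) k ▸ hG.mul_mem_radialMatrices ih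
      ⟨fun j ↦ if j = i then 1 else 0, fun _ _ ↦ rfl⟩

theorem distanceMatrix_one_mul (hG : IsDistanceRegular G D p) {j : ℕ} (hj : j + 1 < D) :
    distanceMatrix G 1 * distanceMatrix G (j + 1) = (p j 1 (j + 1) : ℝ) • distanceMatrix G j
      + (p (j + 1) 1 (j + 1) : ℝ) • distanceMatrix G (j + 1)
      + (p (j + 1 + 1) 1 (j + 1) : ℝ) • distanceMatrix G (j + 1 + 1) := by
  ext y z
  have hentry : (distanceMatrix G 1 * distanceMatrix G (j + 1)) y z =
      #{u | G.dist y u = 1 ∧ G.dist z u = j + 1} := by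
    simp only [Matrix.mul_apply, distanceMatrix_apply, ← ite_and, mul_ite, mul_one, mul_zero,
      sum_boole, G.dist_comm (v := z), and_comm]
  simp only [hentry, Matrix.add_apply, Matrix.smul_apply, distanceMatrix_apply, smul_eq_mul,
    mul_ite, mul_one, mul_zero]
  by_cases hyz : G.dist y z = j ∨ G.dist y z = j + 1 ∨ G.dist y z = j + 1 + 1
  · rw [hG.card_filter (by omega) (by omega) rfl]
    rcases hyz with h | h | h <;> simp [h, add_assoc]
  · have hempty (u : V) : ¬(G.dist y u = 1 ∧ G.dist z u = j + 1) := by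
      have := dist_triangle_bounds hG.connected y u z
      omega
    simp only [not_or] at hyz
    simp only [hempty, hyz, filter_false, card_empty, Nat.cast_zero, if_false, add_zero]

theorem distanceMatrix_mem_span_pow [DecidableEq V] (hG : IsDistanceRegular G D p) {i : ℕ}
    (hi : i ≤ D) :
    distanceMatrix G i ∈ Submodule.span ℝ ((distanceMatrix G 1 ^ ·) '' Set.Iic i) := by
  set A := distanceMatrix G 1
  have hmono {i j : ℕ} (hij : i ≤ j) : Submodule.span ℝ ((A ^ ·) '' Set.Iic i) ≤
      Submodule.span ℝ ((A ^ ·) '' Set.Iic j) :=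
    Submodule.span_mono (Set.image_mono (Set.Iic_subset_Iic.2 hij))
  have hmul {i : ℕ} {M : Matrix V V ℝ} (hM : M ∈ Submodule.span ℝ ((A ^ ·) '' Set.Iic i)) :
      A * M ∈ Submodule.span ℝ ((A ^ ·) '' Set.Iic (i + 1)) := by
    refine (Submodule.map_span_le (LinearMap.mulLeft ℝ A) _ _).2 ?_ (Submodule.mem_map_of_mem hM)
    rintro _ ⟨k, hk, rfl⟩
    exact Submodule.subset_span ⟨k + 1, Nat.succ_le_succ hk, pow_succ' A k⟩
  induction i using Nat.strong_induction_on with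
  | _ i ih =>
    match i with
    | 0 =>
      refine Submodule.subset_span ⟨0, Set.mem_Iic.2 le_rfl, ?_⟩
      ext y z
      simp only [pow_zero, Matrix.one_apply, distanceMatrix_apply, hG.connected.dist_eq_zero_iff]
    | 1 => exact Submodule.subset_span ⟨1, Set.mem_Iic.2 le_rfl, pow_one A⟩
    | j + 2 =>
      have hpos : (p (j + 1 + 1) 1 (j + 1) : ℝ) ≠ 0 := by
        have := hG.intersection_pos (i := 1) (j := j + 1) (by omega)
        rw [add_comm] at this
        exact_mod_cast this.ne'
      rw [← Submodule.smul_mem_iff _ hpos,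
        ← sub_eq_of_eq_add' (hG.distanceMatrix_one_mul (j := j) (by omega))]
      exact sub_mem (hmul (ih (j + 1) (by omega) (by omega)))
        (add_mem (Submodule.smul_mem _ _ (hmono (by omega) (ih j (by omega) (by omega))))
          (Submodule.smul_mem _ _ (hmono (by omega) (ih (j + 1) (by omega) (by omega)))))

end IsDistanceRegular

open scoped Matrix

section KreinKernel

variable {k t s s' : ℝ} {c e θ g : ℤ → ℝ} {D : ℕ}

theorem exists_eq_affine_of_threeTermOp (hc : c 0 = 0) (he : ∀ i : ℕ, i < D → e i ≠ 0)
    (hθ : θ 1 ≠ θ 0) (hθL : ∀ i : ℕ, i < D → threeTermOp k c e θ i = t * θ i + s)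
    (hgL : ∀ i : ℕ, i < D → threeTermOp k c e g i = t * g i + s') :
    ∃ r r' : ℝ, ∀ i : ℕ, i ≤ D → g i = r * θ i + r' := by
  have hsub : θ 1 - θ 0 ≠ 0 := sub_ne_zero.2 hθ
  let r := (g 1 - g 0) / (θ 1 - θ 0)
  let h (i : ℤ) := g i - r * θ i - (g 0 - r * θ 0)
  have hzero : h 0 = 0 := sub_self _
  have hone : h 1 = 0 := by
    simp only [h, r]
    field_simp
    ring
  have hhL (i : ℕ) (hi : i < D) : e i * (h (i + 1) - h i) + c i * (h (i - 1) - h i) =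
      (t - k) * h i + e 0 * (h 1 - h 0) - (t - k) * h 0 := by
    have hθi := hθL i hi
    have hgi := hgL i hi
    have hθ0 := hθL 0 (by omega)
    have hg0 := hgL 0 (by omega)
    simp only [threeTermOp, Nat.cast_zero, zero_add, hc] at hθi hgi hθ0 hg0
    simp only [h]
    linear_combination hgi - hg0 - r * (hθi - hθ0)
  have hvanish (i : ℕ) (hi : i ≤ D) : h i = 0 := by
    induction i using Nat.strong_induction_on with
    | _ i ih =>
      match i with
      | 0 => exact hzero
      | 1 => exact hone
      | i + 2 =>
        have hstep := hhL (i + 1) (by omega)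
        have hi0 := ih i (by omega) (by omega)
        have hi1 := ih (i + 1) (by omega) (by omega)
        rw [hi1, hzero, hone, Nat.cast_succ, add_sub_cancel_right, hi0, add_assoc] at hstep
        simpa [show e (i + 1) ≠ 0 from mod_cast he (i + 1) (by omega)] using hstep
  exact ⟨r, g 0 - r * θ 0, fun i hi ↦ by linear_combination hvanish i hi⟩

end KreinKernel

namespace IsDistanceRegular

variable {G : SimpleGraph V} {D : ℕ} {p : ℕ → ℕ → ℕ → ℕ} {c e : ℤ → ℝ}

theorem intersection_succ_pos [Finite V] (hG : IsDistanceRegular G D p) {i : ℕ} (hi : i < D) :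
    0 < p i 1 (i + 1) := by
  obtain ⟨x, y, hxy⟩ := hG.exists_dist_eq (i := 1 + i) (by omega)
  obtain ⟨w, hxw, hwy⟩ := exists_dist_eq_of_dist_eq_add hG.connected hxy
  rw [← hG.isDistRegularWith i 1 (i + 1) (by omega) (by omega) (by omega) w y hwy, Set.ncard_pos]
  exact ⟨x, G.dist_comm.trans hxw, by rw [G.dist_comm, hxy, add_comm]⟩

variable [Fintype V]

theorem card_neighbors_pred (hG : IsDistanceRegular G D p) (hD : 1 ≤ D) {v w : V} :
    #{u | G.dist v u = 1 ∧ G.dist w u + 1 = G.dist w v} =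
      p (G.dist w v) 1 (G.dist w v - 1) := by
  have hle := hG.dist_le w v
  rw [← hG.card_filter hD (by omega) (G.dist_comm (u := v) (v := w))]
  congr 1 with u
  simp only [mem_filter_univ]
  rcases Nat.eq_zero_or_pos (G.dist w v) with h | h
  · rw [hG.connected.dist_eq_zero_iff] at h
    subst h
    rw [G.dist_self]
    omega
  · omega

theorem card_neighbors_succ (hG : IsDistanceRegular G D p) {v w : V}
    (hlt : G.dist w v < D) : #{u | G.dist v u = 1 ∧ G.dist w u = G.dist w v + 1} =
      p (G.dist w v) 1 (G.dist w v + 1) :=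
  hG.card_filter (by omega) hlt G.dist_comm

theorem card_neighbors (hG : IsDistanceRegular G D p) (hD : 1 ≤ D) (v : V) :
    #{u | G.dist v u = 1} = p 0 1 1 := by
  rw [← hG.card_filter hD hD (G.dist_self (v := v))]
  simp only [and_self]

theorem distanceMatrix_one_mulVec (hG : IsDistanceRegular G D p) (hD : 1 ≤ D)
    (hc : ∀ i : ℕ, i ≤ D → c i = p i 1 (i - 1)) (he : ∀ i : ℕ, i < D → e i = p i 1 (i + 1))
    (heD : e D = 0) (w : V) (f : ℤ → ℝ) :
    distanceMatrix G 1 *ᵥ (fun u ↦ f (G.dist w u)) =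
      fun v ↦ threeTermOp (p 0 1 1) c e f (G.dist w v) := by
  ext v
  set i := G.dist w v with hi
  have hterm (u : V) (hu : G.dist v u = 1) : f (G.dist w u) = f i
      + (if G.dist w u + 1 = i then f (i - 1) - f i else 0)
      + (if G.dist w u = i + 1 then f (i + 1) - f i else 0) := by
    have := dist_triangle_bounds hG.connected w v u
    obtain h | h | h : G.dist w u + 1 = i ∨ G.dist w u = i ∨ G.dist w u = i + 1 := by omega
    · simp [← h, add_assoc]
    · simp [h]
    · simp [h, add_assoc]
  have hpred : (#{u | G.dist v u = 1 ∧ G.dist w u + 1 = i} : ℝ) = c i := by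
    rw [hc i (hG.dist_le w v), hG.card_neighbors_pred hD]
  have hsucc : (#{u | G.dist v u = 1 ∧ G.dist w u = i + 1} : ℝ) = e i := by
    rcases (hG.dist_le w v).eq_or_lt with h | h
    · rw [hi, h, heD, Nat.cast_eq_zero, card_eq_zero, filter_eq_empty_iff]
      exact fun u _ hu ↦ (hG.dist_le w u).not_gt (by omega)
    · rw [he i h, hG.card_neighbors_succ h]
  simp only [Matrix.mulVec, dotProduct, distanceMatrix_apply, ite_mul, one_mul, zero_mul,
    ← sum_filter]
  rw [sum_congr rfl fun u hu ↦ hterm u (mem_filter.1 hu).2]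
  simp only [sum_add_distrib, ← sum_filter, filter_filter, sum_const, nsmul_eq_mul, hpred, hsucc,
    hG.card_neighbors hD, threeTermOp]

theorem exists_sum_mul_eq_affine (hG : IsDistanceRegular G D p) (hc : c 0 = 0)
    (he : ∀ i : ℕ, i < D → e i ≠ 0)
    {k t s : ℝ} {θ : ℤ → ℝ} (hθ : θ 1 ≠ θ 0)
    (hradial : ∀ w (f : ℤ → ℝ), distanceMatrix G 1 *ᵥ (fun u ↦ f (G.dist w u)) =
      fun v ↦ threeTermOp k c e f (G.dist w v))
    (hθL : ∀ i : ℕ, threeTermOp k c e θ i = t * θ i + s) :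
    ∃ r r' : ℝ, ∀ u v, ∑ x, θ (G.dist x u) * θ (G.dist x v) = r * θ (G.dist v u) + r' := by
  obtain ⟨x₀, y₀, hxy₀⟩ := hG.exists_dist_eq_diam
  obtain ⟨g, hg⟩ : ∃ g : ℤ → ℝ, ∀ u v,
      ∑ x, θ (G.dist u x) * θ (G.dist x v) = g (G.dist u v) :=
    ⟨fun h ↦ ∑ ij ∈ range (D + 1) ×ˢ range (D + 1), p h.toNat ij.1 ij.2 * (θ ij.1 * θ ij.2),
      fun u v ↦ by
        simpa only [G.dist_comm (u := v), Int.toNat_natCast] using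
          hG.sum_dist_mul_dist (fun i ↦ θ i) (fun i ↦ θ i) u v⟩
  have hgL (i : ℕ) (hi : i < D) : threeTermOp k c e g i =
      t * g i + s * ∑ x, θ (G.dist x₀ x) := by
    obtain ⟨v, hv, -⟩ := exists_dist_eq_of_dist_eq_add hG.connected
      (hxy₀.trans (Nat.add_sub_of_le hi.le).symm)
    have hsum : (fun v ↦ g (G.dist x₀ v)) =
        ∑ x, θ (G.dist x₀ x) • fun v ↦ θ (G.dist x v) := by
      ext v
      simp [← hg]
    have hgv := congrFun (hradial x₀ g) v
    rw [hv] at hgv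
    rw [← hgv, hsum, Matrix.mulVec_sum, Finset.sum_apply, ← hv, ← hg, mul_sum, mul_sum,
      ← sum_add_distrib]
    refine sum_congr rfl fun x _ ↦ ?_
    rw [Matrix.mulVec_smul, hradial, Pi.smul_apply, smul_eq_mul, hθL]
    ring
  obtain ⟨r, r', hr⟩ := exists_eq_affine_of_threeTermOp hc he hθ (fun i _ ↦ hθL i) hgL
  exact ⟨r, r', fun u v ↦ by
    simpa only [G.dist_comm (u := u), ← hr _ (hG.dist_le v u), ← hg, mul_comm] using hg u v⟩

end IsDistanceRegular

section Balanced

variable [Fintype V] {G : SimpleGraph V} {q m : ℝ} {i : ℕ}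

/-- The sum of `q ^ ∂(x, w)` over the neighbours `w` of `z` at distance `i` from `y`. -/
noncomputable def balanceSum (G : SimpleGraph V) (q : ℝ) (i : ℕ) (x z y : V) : ℝ :=
  ∑ w with G.dist z w = 1 ∧ G.dist y w = i, q ^ G.dist x w

/-- Terwilliger's balanced set condition for pairs `y, z` at distance `i`, with cosine sequence
proportional to `q ^ j` up to an additive constant, and balancing factor `m`. -/
def IsBalanced (G : SimpleGraph V) (q : ℝ) (i : ℕ) (m : ℝ) : Prop :=
  ∀ x y z, G.dist y z = i →
    balanceSum G q i x z y - balanceSum G q i x y z = m * (q ^ G.dist x z - q ^ G.dist x y)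

theorem balanceMap_distanceMatrix_apply [DecidableEq V] (x y z : V) :
    balanceMap (distanceMatrix G 1) (fun x u ↦ q ^ G.dist x u) (distanceMatrix G i) x y z =
      balanceSum G q i x z y - balanceSum G q i x y z := by
  rw [balanceMap_apply, Matrix.sub_apply, Matrix.mul_apply, Matrix.mul_apply]
  simp only [Matrix.diagonal_mul, Matrix.mul_diagonal, distanceMatrix_apply, balanceSum, mul_ite,
    ite_mul, one_mul, mul_one, zero_mul, mul_zero, ← ite_and, ← sum_filter, G.dist_comm (v := z)]
  simp only [and_comm]

theorem exists_isBalanced_of_mem_radialDifferences [DecidableEq V]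
    (h : balanceMap (distanceMatrix G 1) (fun x u ↦ q ^ G.dist x u) (distanceMatrix G i) ∈
      radialDifferences G.dist fun x u ↦ q ^ G.dist x u) : ∃ m, IsBalanced G q i m := by
  obtain ⟨r, hr⟩ := h
  exact ⟨r i, fun x y z hyz ↦ by rw [← balanceMap_distanceMatrix_apply, hr, hyz]⟩

end Balanced

namespace IsDistanceRegular

variable {G : SimpleGraph V} {D : ℕ} {p : ℕ → ℕ → ℕ → ℕ}

theorem sum_intersection [Finite V] (hG : IsDistanceRegular G D p) {i : ℕ} (hi : 0 < i)
    (hiD : i < D) : p i 1 (i - 1) + p i 1 i + p i 1 (i + 1) = p 0 1 1 := by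
  classical
  have := Fintype.ofFinite V
  obtain ⟨v, w, hvw⟩ := hG.exists_dist_eq hiD.le
  rw [← hG.card_filter (by omega) (by omega) hvw, ← hG.card_filter (by omega) hiD.le hvw,
    ← hG.card_filter (by omega) hiD hvw, ← hG.card_neighbors (by omega) v,
    ← card_union_of_disjoint, ← card_union_of_disjoint, ← filter_or, ← filter_or]
  · congr 1 with u
    have := dist_triangle_bounds hG.connected v w u
    simp only [mem_filter_univ]
    omega
  · simp only [disjoint_left, mem_union, mem_filter_univ]
    omega
  · simp only [disjoint_left, mem_filter_univ]
    omega

end IsDistanceRegular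

theorem gaussBracket_eq {b : ℝ} (hb : b ≠ 1) (i : ℕ) : gaussBracket b i = (b ^ i - 1) / (b - 1) :=
  geom_sum_eq hb i

namespace HasClassicalParams

variable {G : SimpleGraph V} {D : ℕ} {p : ℕ → ℕ → ℕ → ℕ} {b α β : ℝ}

theorem exists_intersection_eq_quadratic (h : HasClassicalParams D p b α β) (hb1 : b ≠ 1) :
    ∃ c₀ c₁ c₂ e₀ e₁ : ℝ, ∀ i ≤ D,
      (p i 1 (i - 1) : ℝ) = c₀ + c₁ * b ^ i + c₂ * (b ^ i) ^ 2 ∧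
      (p i 1 (i + 1) : ℝ) = e₀ + e₁ * b ^ i + b * c₂ * (b ^ i) ^ 2 := by
  obtain ⟨hb, -, hc, he⟩ := h
  set u := (b - 1)⁻¹
  set δ := gaussBracket b D
  have hbracket (i : ℕ) : gaussBracket b i = (b ^ i - 1) * u := gaussBracket_eq hb1 i
  refine ⟨-u + α * u ^ 2, u - α * u ^ 2 - α * b⁻¹ * u ^ 2, α * b⁻¹ * u ^ 2,
    (δ + u) * (β + α * u), -u * (β + α * u) - α * u * (δ + u), fun i hi ↦ ⟨?_, ?_⟩⟩
  · rw [hc i hi]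
    cases i with
    | zero =>
      rw [hbracket]
      ring
    | succ i =>
      rw [hbracket, hbracket, Nat.add_sub_cancel, pow_succ]
      field_simp
      ring
  · rw [he i hi, hbracket]
    field_simp
    ring

theorem exists_commute_tridiagonalOp_diagonal [Fintype V] [DecidableEq V]
    (h : HasClassicalParams D p b α β) (hG : IsDistanceRegular G D p) (hb1 : b ≠ 1) (hD : 1 ≤ D) :
    ∃ γ ρ : ℝ, ∀ x, Commute (distanceMatrix G 1) (tridiagonalOp (distanceMatrix G 1) (b + b⁻¹) γ ρ
      (Matrix.diagonal fun u ↦ b⁻¹ ^ G.dist x u)) := by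
  obtain ⟨c₀, c₁, c₂, e₀, e₁, hpce⟩ := h.exists_intersection_eq_quadratic hb1
  obtain ⟨hb, -, hpc, hpe⟩ := h
  let c (i : ℤ) := c₀ + c₁ * b ^ i + c₂ * (b ^ i) ^ 2
  let e (i : ℤ) := e₀ + e₁ * b ^ i + b * c₂ * (b ^ i) ^ 2
  have hc (i : ℕ) (hi : i ≤ D) : c i = p i 1 (i - 1) := by
    simp only [c, zpow_natCast, (hpce i hi).1]
  have he (i : ℕ) (hi : i ≤ D) : e i = p i 1 (i + 1) := by
    simp only [e, zpow_natCast, (hpce i hi).2]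
  have hc0 : c 0 = 0 := by
    rw [← Nat.cast_zero, hc 0 D.zero_le, hpc 0 D.zero_le, gaussBracket, sum_range_zero, zero_mul]
  have heD : e D = 0 := by rw [he D le_rfl, hpe D le_rfl, sub_self, zero_mul]
  have hepos (i : ℕ) (hi : i < D) : e i ≠ 0 := by
    rw [he i hi.le]
    exact_mod_cast (hG.intersection_succ_pos hi).ne'
  have hradial := hG.distanceMatrix_one_mulVec hD hc (fun i hi ↦ he i hi.le) heD
  obtain ⟨t, s, hL⟩ :=
    exists_threeTermOp_zpow (p 0 1 1) hb (c := c) (e := e) (fun _ ↦ rfl) fun _ ↦ rfl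
  obtain ⟨r, r', hsum⟩ := hG.exists_sum_mul_eq_affine hc0 hepos
    (θ := fun j ↦ b⁻¹ ^ j) (by simpa using hb1) hradial fun i ↦ hL i
  exact exists_commute_tridiagonalOp distanceMatrix_isSymm
    (fun w u ↦ hG.connected.dist_eq_zero_iff) hradial hb (fun _ ↦ rfl) (fun _ ↦ rfl)
    (fun u v ↦ by simpa only [zpow_natCast] using hsum u v)

theorem exists_isBalanced [Fintype V] (h : HasClassicalParams D p b α β)
    (hG : IsDistanceRegular G D p) (hb1 : b ≠ 1) (hD : 1 ≤ D) {i : ℕ} (hi : i ≤ 3) (hiD : i ≤ D) :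
    ∃ m, IsBalanced G b⁻¹ i m := by
  classical
  obtain ⟨γ, ρ, hcomm⟩ := h.exists_commute_tridiagonalOp_diagonal hG hb1 hD
  have hb := h.1
  have hβ : b + b⁻¹ ≠ 0 := fun hzero ↦ by
    field_simp at hzero
    nlinarith
  have hβ' : b + b⁻¹ + 1 ≠ 0 := fun hzero ↦ by
    field_simp at hzero
    nlinarith [sq_nonneg (b + 1)]
  refine exists_isBalanced_of_mem_radialDifferences ?_
  refine (Submodule.map_span_le (balanceMap _ _) _ _).2 ?_
    (Submodule.mem_map_of_mem (hG.distanceMatrix_mem_span_pow hiD))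
  rintro _ ⟨k, hk, rfl⟩
  exact balanceMap_pow_mem_radialDifferences hcomm hβ hβ'
    (hG.pow_distanceMatrix_mem_radialMatrices 1) (le_trans hk hi)

theorem intersection_two_one_two [Finite V] (h : HasClassicalParams D p b α β)
    (hG : IsDistanceRegular G D p) (hD : 2 < D) (ha₁ : p 1 1 1 = 0) :
    (p 2 1 2 : ℝ) = -α * (1 + b) ^ 2 := by
  obtain ⟨-, -, hc, he⟩ := h
  have hk := he 0 D.zero_le
  have hc₁ := hc 1 (by omega)
  have he₁ := he 1 (by omega)
  have hc₂ := hc 2 hD.le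
  have he₂ := he 2 hD.le
  have hsum₁ : (p 1 1 0 + p 1 1 1 + p 1 1 2 : ℝ) = p 0 1 1 :=
    mod_cast hG.sum_intersection zero_lt_one (by omega)
  have hsum₂ : (p 2 1 1 + p 2 1 2 + p 2 1 3 : ℝ) = p 0 1 1 :=
    mod_cast hG.sum_intersection zero_lt_two hD
  set δ := gaussBracket b D
  simp only [gaussBracket, geom_sum_zero, geom_sum_one, geom_sum_two, tsub_self, Nat.reduceAdd,
    Nat.reduceSub, zero_add] at hk hc₁ he₁ hc₂ he₂
  rw [hc₁, he₁, hk, ha₁, Nat.cast_zero] at hsum₁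
  rw [hc₂, he₂, hk] at hsum₂
  have hβ : δ * α + β = 1 + α := by linear_combination -hsum₁
  linear_combination hsum₂ + (1 + b) * hβ

theorem neg_mul_one_add_lt_one [Finite V] (h : HasClassicalParams D p b α β)
    (hG : IsDistanceRegular G D p) (hD : 3 ≤ D) : -α * (1 + b) < 1 := by
  have hc₃ := h.2.2.1 3 hD
  have hpos : (0 : ℝ) < p 3 1 2 := mod_cast hG.intersection_pos (i := 1) (j := 2) hD
  rw [hc₃] at hpos
  simp only [gaussBracket, sum_range_succ, range_zero, sum_empty, pow_zero, pow_one,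
    Nat.reduceSub, zero_add] at hpos
  nlinarith [pos_of_mul_pos_right hpos (by nlinarith [sq_nonneg (2 * b + 1)])]

theorem ne_one [Finite V] (h : HasClassicalParams D p b α β) (hG : IsDistanceRegular G D p)
    (hD : 3 ≤ D) (ha₁ : p 1 1 1 = 0) (ha₂ : p 2 1 2 ≠ 0) : b ≠ 1 := by
  rintro rfl
  have hlt := h.neg_mul_one_add_lt_one hG hD
  have ha := h.intersection_two_one_two hG hD ha₁
  have hc₂ := h.2.2.1 2 (by omega)
  have ha_lt : (p 2 1 2 : ℝ) < 2 := by linarith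
  have ha_one : p 2 1 2 = 1 := by
    have : p 2 1 2 < 2 := mod_cast ha_lt
    omega
  have hα : α = -1 / 4 := by
    rw [ha_one, Nat.cast_one] at ha
    linarith
  have hc : (2 * p 2 1 1 : ℝ) = 3 := by
    simp only [gaussBracket, geom_sum_one, geom_sum_two, Nat.reduceSub, hα] at hc₂
    linarith
  have : 2 * p 2 1 1 = 3 := mod_cast hc
  omega

end HasClassicalParams

section BalancedCount

variable {G : SimpleGraph V} {D : ℕ} {p : ℕ → ℕ → ℕ → ℕ} {q m : ℝ} {i j : ℕ} {x y z : V}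

/-- There is no parallelogram of length `i + 1`: no vertices `x ∼ y` and `z ∼ w` with
`∂(x, z) = i + 1` and `∂(x, w) = ∂(y, z) = ∂(y, w) = i`. As the other distances force
`∂(x, w) ∈ {i, i + 1}`, this is encoded as `∂(x, w) = i + 1`. -/
def ParallelogramFree (G : SimpleGraph V) (i : ℕ) : Prop :=
  ∀ x y z w, G.dist x y = 1 → G.dist z w = 1 → G.dist y z = i → G.dist y w = i →
    G.dist x z = i + 1 → G.dist x w = i + 1

theorem sum_pow_eq_of_two_valued {ι : Type*} {s : Finset ι} {f : ι → ℕ}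
    (hf : ∀ w ∈ s, f w = j ∨ f w = j + 1) :
    ∑ w ∈ s, q ^ f w = #s * q ^ j + #{w ∈ s | f w = j + 1} * (q ^ (j + 1) - q ^ j) := by
  have hterm (w) (hw : w ∈ s) :
      q ^ f w = q ^ j + (if f w = j + 1 then 1 else 0) * (q ^ (j + 1) - q ^ j) := by
    rcases hf w hw with h | h <;> simp [h]
  rw [sum_congr rfl hterm, sum_add_distrib, ← sum_mul, sum_const, sum_boole, nsmul_eq_mul]

theorem IsDistanceRegular.not_triangle [Finite V] (hG : IsDistanceRegular G D p) (hD : 1 ≤ D)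
    (ha₁ : p 1 1 1 = 0) (u v w : V) :
    ¬(G.dist u v = 1 ∧ G.dist v w = 1 ∧ G.dist u w = 1) := by
  have := Fintype.ofFinite V
  rintro ⟨huv, hvw, huw⟩
  rw [← hG.card_filter hD hD huv, card_eq_zero] at ha₁
  exact filter_eq_empty_iff.1 ha₁ (mem_univ w) ⟨huw, hvw⟩

variable [Fintype V]

namespace IsDistanceRegular

theorem balanceSum_eq (hG : IsDistanceRegular G D p) (hD : 1 ≤ D) (hzy : G.dist z y = i)
    (hx : ∀ w, G.dist z w = 1 → G.dist y w = i → G.dist x w = j) :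
    balanceSum G q i x z y = p i 1 i * q ^ j := by
  rw [← hG.card_filter hD (hzy ▸ hG.dist_le z y) hzy, ← nsmul_eq_mul, ← sum_const, balanceSum]
  refine sum_congr rfl fun w hw ↦ ?_
  rw [hx w (mem_filter.1 hw).2.1 (mem_filter.1 hw).2.2]

theorem exists_balanceSum_eq (hG : IsDistanceRegular G D p) (hD : 1 ≤ D) (hzy : G.dist z y = i)
    (hx : ∀ w, G.dist z w = 1 → G.dist y w = i → G.dist x w = j ∨ G.dist x w = j + 1) :
    ∃ N : ℕ, balanceSum G q i x z y = p i 1 i * q ^ j + N * (q ^ (j + 1) - q ^ j) ∧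
      (N = p i 1 i → ∀ w, G.dist z w = 1 → G.dist y w = i → G.dist x w = j + 1) := by
  refine ⟨#{w ∈ {w | G.dist z w = 1 ∧ G.dist y w = i} | G.dist x w = j + 1}, ?_,
    fun hN w hzw hyw ↦ ?_⟩
  · rw [← hG.card_filter hD (hzy ▸ hG.dist_le z y) hzy]
    exact sum_pow_eq_of_two_valued fun w hw ↦ hx w (mem_filter.1 hw).2.1 (mem_filter.1 hw).2.2
  · rw [← hG.card_filter hD (hzy ▸ hG.dist_le z y) hzy, card_filter_eq_iff] at hN
    exact hN w (mem_filter_univ _ |>.2 ⟨hzw, hyw⟩)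

theorem balanceFactor_eq (hG : IsDistanceRegular G D p) (hD : 1 ≤ D) (hi : i ≤ D)
    (hbal : IsBalanced G q i m) : m * (q ^ i - 1) = p i 1 i * (q ^ i - q) := by
  obtain ⟨y, z, hyz⟩ := hG.exists_dist_eq hi
  have h := hbal y y z hyz
  rw [hG.balanceSum_eq hD (G.dist_comm.trans hyz) fun w _ hyw ↦ hyw,
    hG.balanceSum_eq hD hyz fun w hyw _ ↦ hyw, hyz, G.dist_self, pow_zero, pow_one] at h
  linear_combination -h

theorem parallelogramFree (hG : IsDistanceRegular G D p) (ha₁ : p 1 1 1 = 0) (hi : 0 < i)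
    (hiD : i < D) (hq₀ : q ≠ 0) (hq₁ : q ≠ 1) (hbal : IsBalanced G q i m) :
    ParallelogramFree G i := by
  intro x y z w hxy hzw hyz hyw hxz
  have hD : 1 ≤ D := by omega
  have hleft (u : V) (hzu : G.dist z u = 1) (hyu : G.dist y u = i) :
      G.dist x u = i ∨ G.dist x u = i + 1 := by
    have := dist_triangle_bounds hG.connected x y u
    have := dist_triangle_bounds hG.connected x z u
    omega
  have hright (u : V) (hyu : G.dist y u = 1) (hzu : G.dist z u = i) : G.dist x u = 2 := by
    have := dist_triangle_bounds hG.connected x y u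
    have := dist_triangle_bounds hG.connected x z u
    have := hG.not_triangle hD ha₁ x y u
    omega
  obtain ⟨N, hN, hNw⟩ := hG.exists_balanceSum_eq (q := q) hD (G.dist_comm.trans hyz) hleft
  have hxyz := hbal x y z hyz
  rw [hN, hG.balanceSum_eq hD hyz hright, hxz, hxy] at hxyz
  refine hNw ?_ w hzw hyw
  have hqi : q ^ (i + 1) - q ^ i ≠ 0 := by
    rw [pow_succ, ← mul_sub_one]
    exact mul_ne_zero (pow_ne_zero _ hq₀) (sub_ne_zero.2 hq₁)
  have hNreal : (N : ℝ) = p i 1 i := mul_right_cancel₀ hqi <| by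
    linear_combination hxyz + q * hG.balanceFactor_eq hD hiD.le hbal
  exact_mod_cast hNreal

end IsDistanceRegular

end BalancedCount

section BalancedTriangleFree

variable {G : SimpleGraph V} {D : ℕ} {p : ℕ → ℕ → ℕ → ℕ} {q m b α β : ℝ} {x y z u v w s t : V}

theorem mem_Bset_iff (hxz : G.dist x z = 3) : u ∈ Bset G x z ↔ G.dist x u = 1 ∧ G.dist z u = 4 := by
  simp only [Bset, Set.mem_ofPred_eq, hxz]

variable [Fintype V]

/-- Distance-regular graphs with `a₁ = 0` and `a₂ ≠ 0` in which the sums of `q ^ ∂(x, ·)` over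
`A(z, y)` and `A(y, z)` are balanced whenever `∂(y, z)` is `2` or `3`, the factor `m` for
distance `2` being less than `1`. -/
structure IsBalancedTriangleFree (G : SimpleGraph V) (D : ℕ) (p : ℕ → ℕ → ℕ → ℕ) (q m : ℝ) : Prop
    extends IsDistanceRegular G D p where
  four_le : 4 ≤ D
  a_one : p 1 1 1 = 0
  a_two : p 2 1 2 ≠ 0
  q_ne_zero : q ≠ 0
  q_ne_one : q ≠ 1
  isBalanced : IsBalanced G q 2 m
  factor_lt_one : m < 1
  exists_isBalanced_three : ∃ r, IsBalanced G q 3 r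

theorem IsDistanceRegular.factor_mul_one_add (hG : IsDistanceRegular G D p) (hD : 2 ≤ D)
    (hq₁ : q ≠ 1) (hbal : IsBalanced G q 2 m) : m * (1 + q) = p 2 1 2 * q :=
  mul_right_cancel₀ (sub_ne_zero.2 hq₁) <| by
    linear_combination hG.balanceFactor_eq (one_le_two.trans hD) hD hbal

theorem HasClassicalParams.exists_isBalancedTriangleFree (h : HasClassicalParams D p b α β)
    (hG : IsDistanceRegular G D p) (hD : 4 ≤ D) (ha₁ : p 1 1 1 = 0) (ha₂ : p 2 1 2 ≠ 0) :
    ∃ m, IsBalancedTriangleFree G D p b⁻¹ m := by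
  have hb := h.1
  have hb₁ := h.ne_one hG (by omega) ha₁ ha₂
  have hq₁ : b⁻¹ ≠ 1 := inv_ne_one.2 hb₁
  obtain ⟨m, hm⟩ := h.exists_isBalanced hG hb₁ (by omega) (i := 2) (by omega) (by omega)
  refine ⟨m, hG, hD, ha₁, ha₂, inv_ne_zero hb, hq₁, hm, ?_,
    h.exists_isBalanced hG hb₁ (by omega) le_rfl (by omega)⟩
  have hb₂ : 1 + b ≠ 0 := fun h₀ ↦ h.2.1 (by linarith)
  have hmb : m * (1 + b) = p 2 1 2 := by
    have := hG.factor_mul_one_add (by omega) hq₁ hm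
    field_simp at this
    linarith
  have hmα : m = -α * (1 + b) := mul_right_cancel₀ hb₂ <| by
    linear_combination hmb + h.intersection_two_one_two hG (by omega) ha₁
  exact hmα ▸ h.neg_mul_one_add_lt_one hG (by omega)

namespace IsBalancedTriangleFree

theorem one_le_diam (hG : IsBalancedTriangleFree G D p q m) : 1 ≤ D :=
  le_trans (by norm_num) hG.four_le

theorem dist_bounds (hG : IsBalancedTriangleFree G D p q m) (u v w : V) :
    ((G.dist u w ≤ G.dist u v + G.dist v w ∧ G.dist u v ≤ G.dist u w + G.dist v w ∧
      G.dist v w ≤ G.dist u v + G.dist u w) ∧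
    G.dist v u = G.dist u v ∧ G.dist w u = G.dist u w ∧ G.dist w v = G.dist v w) ∧
    ¬(G.dist u v = 1 ∧ G.dist v w = 1 ∧ G.dist u w = 1) :=
  ⟨dist_triangle_bounds hG.connected u v w,
    hG.not_triangle hG.one_le_diam hG.a_one u v w⟩

theorem parallelogramFree_two (hG : IsBalancedTriangleFree G D p q m) : ParallelogramFree G 2 :=
  hG.parallelogramFree hG.a_one two_pos (by linarith [hG.four_le]) hG.q_ne_zero hG.q_ne_one
    hG.isBalanced

theorem parallelogramFree_three (hG : IsBalancedTriangleFree G D p q m) : ParallelogramFree G 3 :=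
  let ⟨_, hr⟩ := hG.exists_isBalanced_three
  hG.parallelogramFree hG.a_one three_pos hG.four_le hG.q_ne_zero hG.q_ne_one hr

theorem pow_mul_sub_one_ne_zero (hG : IsBalancedTriangleFree G D p q m) (i : ℕ) :
    q ^ i * (q - 1) ≠ 0 :=
  mul_ne_zero (pow_ne_zero i hG.q_ne_zero) (sub_ne_zero.2 hG.q_ne_one)

theorem factor_ne_natCast (hG : IsBalancedTriangleFree G D p q m) (n : ℕ) : m ≠ n := by
  rintro rfl
  have hn : n = 0 := Nat.lt_one_iff.1 (mod_cast hG.factor_lt_one)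
  have := hG.factor_mul_one_add (by linarith [hG.four_le]) hG.q_ne_one hG.isBalanced
  rw [hn, Nat.cast_zero, zero_mul, eq_comm, mul_eq_zero] at this
  exact this.elim (mod_cast hG.a_two) hG.q_ne_zero

theorem exists_common_neighbor (hG : IsBalancedTriangleFree G D p q m) (huv : G.dist u v = 2) :
    ∃ r, G.dist u r = 1 ∧ G.dist r v = 1 :=
  exists_dist_eq_of_dist_eq_add hG.connected (i := 1) (j := 1) huv

theorem exists_common_neighbor_not_common (hG : IsBalancedTriangleFree G D p q m)
    (hst : G.dist s t = 2) (huv : G.dist u v = 2) {e : V} (hue : G.dist u e = 1)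
    (hve : G.dist v e = 1) (hste : ¬(G.dist s e = 1 ∧ G.dist t e = 1)) :
    ∃ r, G.dist s r = 1 ∧ G.dist t r = 1 ∧ ¬(G.dist u r = 1 ∧ G.dist v r = 1) := by
  have hD := hG.four_le
  by_contra! hcommon
  have hsub : {r | G.dist s r = 1 ∧ G.dist t r = 1} ⊆ {r | G.dist u r = 1 ∧ G.dist v r = 1} :=
    fun r hr ↦ hcommon r hr.1 hr.2
  have heq := Set.eq_of_subset_of_ncard_le hsub (ht := Set.toFinite _) <| by
    rw [hG.isDistRegularWith 2 1 1 (by omega) (by omega) (by omega) s t hst,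
      hG.isDistRegularWith 2 1 1 (by omega) (by omega) (by omega) u v huv]
  exact hste (heq.ge ⟨hue, hve⟩)

theorem exists_adj_dist_eq_two (hG : IsBalancedTriangleFree G D p q m) (hzy : G.dist z y = 2) :
    ∃ w, G.dist z w = 1 ∧ G.dist y w = 2 := by
  have hD := hG.four_le
  obtain ⟨w, hw⟩ := card_ne_zero.1
    ((hG.card_filter (i := 1) (j := 2) (by omega) (by omega) hzy).trans_ne hG.a_two)
  exact ⟨w, (mem_filter_univ w).1 hw⟩

theorem dist_ne_two_of_dist_eq_two (hG : IsBalancedTriangleFree G D p q m) (huz : G.dist u z = 4)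
    (huv : G.dist u v = 3) (hvz : G.dist v z = 1) (htv : G.dist t v = 2) (htz : G.dist t z = 2) :
    G.dist u t ≠ 2 := by
  intro hut
  obtain ⟨r, hur, hrt⟩ := hG.exists_common_neighbor hut
  have := hG.dist_bounds u r z
  have := hG.dist_bounds r t z
  have := hG.dist_bounds v z u
  have hrz : G.dist r z = 3 := by omega
  have hrv := hG.parallelogramFree_two r t z v hrt (by omega) htz htv hrz
  have := hG.parallelogramFree_three u r z v hur (by omega) hrz hrv huz
  omega

theorem Bset_subset_of_adj (hG : IsBalancedTriangleFree G D p q m) (hxz : G.dist x z = 3)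
    (hxw : G.dist x w = 3) (hzw : G.dist z w = 1) : Bset G x z ⊆ Bset G x w := by
  intro u hu
  rw [mem_Bset_iff hxz] at hu
  have := hG.dist_bounds u x z
  have := hG.dist_bounds u w x
  have := hG.parallelogramFree_three u x z w (by omega) hzw hxz hxw (by omega)
  rw [mem_Bset_iff hxw]
  omega

theorem Bset_eq_of_adj (hG : IsBalancedTriangleFree G D p q m) (hxz : G.dist x z = 3)
    (hxw : G.dist x w = 3) (hzw : G.dist z w = 1) : Bset G x z = Bset G x w :=
  (hG.Bset_subset_of_adj hxz hxw hzw).antisymm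
    (hG.Bset_subset_of_adj hxw hxz (G.dist_comm.trans hzw))

theorem Bset_eq_of_subset (hG : IsBalancedTriangleFree G D p q m) (hxz : G.dist x z = 3)
    (hxw : G.dist x w = 3) (h : Bset G x z ⊆ Bset G x w) : Bset G x z = Bset G x w := by
  have hD := hG.four_le
  have hncard {t : V} (hxt : G.dist x t = 3) : (Bset G x t).ncard = p 3 1 4 := by
    rw [← hG.isDistRegularWith 3 1 4 (by omega) (by omega) hD x t hxt, Bset, hxt]
  exact Set.eq_of_subset_of_ncard_le h (by rw [hncard hxz, hncard hxw]) (Set.toFinite _)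

end IsBalancedTriangleFree

end BalancedTriangleFree

section AdjacentPair

variable [Fintype V] {G : SimpleGraph V} {D : ℕ} {p : ℕ → ℕ → ℕ → ℕ} {q m : ℝ}
  {x z u v w s t : V}

namespace IsBalancedTriangleFree

theorem dist_eq_three_of_dist_eq_two (hG : IsBalancedTriangleFree G D p q m)
    (hxv : G.dist x v = 2) (hxw : G.dist x w = 2) (hvw : G.dist v w = 1) (hvz : G.dist v z = 1)
    (hxz : G.dist x z = 3) (hwt : G.dist w t = 1) (hzt : G.dist z t = 2) : G.dist x t = 3 := by
  have := hG.dist_bounds x v w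
  have := hG.dist_bounds x v z
  have := hG.dist_bounds x w t
  have := hG.dist_bounds v w t
  have := hG.dist_bounds v z t
  have := hG.dist_bounds z x t
  have hxt_ne_one : G.dist x t ≠ 1 := fun _ ↦ by
    have := hG.parallelogramFree_two z v x t (by omega) (by omega) (by omega) (by omega) (by omega)
    omega
  have hxt_ne_two : G.dist x t ≠ 2 := fun _ ↦ by
    obtain ⟨r, htr, hxr, hr⟩ := hG.exists_common_neighbor_not_common (s := t) (t := x) (u := v)
      (v := t) (e := w) (by omega) (by omega) (by omega) (by omega) (by omega)
    have := hG.dist_bounds r t w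
    have := hG.dist_bounds r t v
    have := hG.dist_bounds r v w
    have := hG.dist_bounds r x w
    have := hG.dist_bounds r x v
    have := hG.dist_bounds r z v
    have := hG.dist_bounds r z x
    have hrw_ne : G.dist r w ≠ 3 := fun _ ↦ by
      have := hG.parallelogramFree_two r x w t (by omega) (by omega) (by omega) (by omega)
        (by omega)
      omega
    have hrv_ne : G.dist r v ≠ 3 := fun _ ↦ by
      have := hG.parallelogramFree_two r x v w (by omega) (by omega) (by omega) (by omega)
        (by omega)
      omega
    have := hG.parallelogramFree_two z v x r (by omega) (by omega) (by omega) (by omega) (by omega)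
    have := hG.parallelogramFree_two r t z v (by omega) (by omega) (by omega) (by omega) (by omega)
    omega
  omega

theorem dist_eq_two_or_three_of_dist_eq_two (hG : IsBalancedTriangleFree G D p q m)
    (hxv : G.dist x v = 2) (hxw : G.dist x w = 2) (hvw : G.dist v w = 1) (hvz : G.dist v z = 1)
    (hxz : G.dist x z = 3) (hzs : G.dist z s = 1) (hws : G.dist w s = 2) :
    G.dist x s = 2 ∨ G.dist x s = 3 := by
  have := hG.dist_bounds x z s
  have hxs_ne : G.dist x s ≠ 4 := fun hxs ↦ by
    obtain ⟨r, hxr, hrw⟩ := hG.exists_common_neighbor hxw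
    have := hG.dist_bounds r v w
    have := hG.dist_bounds r x v
    have := hG.dist_bounds r v z
    have := hG.dist_bounds r w z
    have := hG.dist_bounds r x z
    have := hG.dist_bounds r w s
    have := hG.dist_bounds v w z
    have := hG.parallelogramFree_two z v x r (by omega) (by omega) (by omega) (by omega) (by omega)
    have := hG.parallelogramFree_two r w z s (by omega) (by omega) (by omega) (by omega) (by omega)
    have := hG.parallelogramFree_three x r s z (by omega) (by omega) (by omega) (by omega)
      (by omega)
    omega
  omega

theorem factor_eq_neg (hG : IsBalancedTriangleFree G D p q m)
    (hxv : G.dist x v = 2) (hxw : G.dist x w = 2) (hvw : G.dist v w = 1) (hvz : G.dist v z = 1)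
    (hxz : G.dist x z = 3) (hs : ∀ s, G.dist z s = 1 → G.dist w s = 2 → G.dist x s = 2) :
    m = -p 2 1 2 := by
  have := hG.dist_bounds w v z
  have := hG.dist_bounds x w z
  have hwz : G.dist w z = 2 := by omega
  have hbal := hG.isBalanced x w z hwz
  rw [hG.balanceSum_eq hG.one_le_diam (by omega) hs,
    hG.balanceSum_eq hG.one_le_diam hwz
      fun t ↦ hG.dist_eq_three_of_dist_eq_two hxv hxw hvw hvz hxz, hxz, hxw] at hbal
  exact mul_right_cancel₀ (hG.pow_mul_sub_one_ne_zero 2) (by linear_combination -hbal)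

theorem dist_eq_four_of_mem_Bset (hG : IsBalancedTriangleFree G D p q m)
    (hxv : G.dist x v = 2) (hxw : G.dist x w = 2) (hvw : G.dist v w = 1) (hvz : G.dist v z = 1)
    (hxz : G.dist x z = 3) (hs : ∀ s, G.dist z s = 1 → G.dist w s = 2 → G.dist x s = 2)
    (hu : u ∈ Bset G x z) (hwt : G.dist w t = 1) (hzt : G.dist z t = 2) : G.dist u t = 4 := by
  rw [mem_Bset_iff hxz] at hu
  have := hG.dist_bounds u v z
  have := hG.dist_bounds u x v
  have := hG.dist_bounds w v z
  have := hG.dist_bounds x w z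
  have huw : G.dist u w = 3 :=
    hG.parallelogramFree_two u x v w (by omega) (by omega) (by omega) (by omega) (by omega)
  have hsum_z (s : V) (hzs : G.dist z s = 1) (hws : G.dist w s = 2) : G.dist u s = 3 := by
    have := hs s hzs hws
    have := hG.dist_bounds u z s
    have := hG.dist_bounds u x s
    omega
  have hsum_w (t : V) (hwt : G.dist w t = 1) (hzt : G.dist z t = 2) :
      G.dist u t = 3 ∨ G.dist u t = 3 + 1 := by
    have := hG.dist_bounds u w t
    have := hG.dist_bounds v t z
    have := hG.dist_bounds v w t
    have := hG.dist_bounds u z t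
    have := hG.dist_ne_two_of_dist_eq_two (u := u) (v := v) (z := z) (t := t)
      (by omega) (by omega) (by omega) (by omega) (by omega)
    omega
  have hwz : G.dist w z = 2 := by omega
  obtain ⟨N, hN, hNt⟩ := hG.exists_balanceSum_eq (q := q) hG.one_le_diam hwz hsum_w
  have hbal := hG.isBalanced u w z hwz
  rw [hG.balanceSum_eq hG.one_le_diam (by omega) hsum_z, hN, huw, show G.dist u z = 4 by omega,
    hG.factor_eq_neg hxv hxw hvw hvz hxz hs] at hbal
  have hN_eq : (N : ℝ) = p 2 1 2 :=
    mul_right_cancel₀ (hG.pow_mul_sub_one_ne_zero 3) (by linear_combination -hbal)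
  exact hNt (mod_cast hN_eq) t hwt hzt

theorem exists_adj_Bset_eq (hG : IsBalancedTriangleFree G D p q m)
    (hxv : G.dist x v = 2) (hxw : G.dist x w = 2) (hvw : G.dist v w = 1) (hvz : G.dist v z = 1)
    (hxz : G.dist x z = 3) : ∃ t, G.dist w t = 1 ∧ G.dist x t = 3 ∧ Bset G x t = Bset G x z := by
  have := hG.dist_bounds w v z
  have := hG.dist_bounds x w z
  have hwz : G.dist w z = 2 := by omega
  have hdist_t {t : V} := hG.dist_eq_three_of_dist_eq_two (t := t) hxv hxw hvw hvz hxz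
  by_cases hs : ∀ s, G.dist z s = 1 → G.dist w s = 2 → G.dist x s = 2
  · obtain ⟨t, hwt, hzt⟩ := hG.exists_adj_dist_eq_two hwz
    have hxt := hdist_t hwt hzt
    refine ⟨t, hwt, hxt, (hG.Bset_eq_of_subset hxz hxt fun u hu ↦ ?_).symm⟩
    rw [mem_Bset_iff hxt]
    exact ⟨hu.1, G.dist_comm.trans (hG.dist_eq_four_of_mem_Bset hxv hxw hvw hvz hxz hs hu hwt hzt)⟩
  · push Not at hs
    obtain ⟨s, hzs, hws, hxs_ne⟩ := hs
    have hxs := (hG.dist_eq_two_or_three_of_dist_eq_two hxv hxw hvw hvz hxz hzs hws).resolve_left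
      hxs_ne
    obtain ⟨t, hwt, hts⟩ := hG.exists_common_neighbor hws
    have := hG.dist_bounds z s t
    have := hG.dist_bounds w t z
    have hxt := hdist_t hwt (by omega)
    exact ⟨t, hwt, hxt,
      (hG.Bset_eq_of_adj hxt hxs hts).trans (hG.Bset_eq_of_adj hxs hxz (by omega))⟩

end IsBalancedTriangleFree

end AdjacentPair

section Delta

variable {G : SimpleGraph V} {D : ℕ} {p : ℕ → ℕ → ℕ → ℕ} {q m : ℝ} {x y u v w s t : V}

theorem mem_Delta_of_Bset_eq (hxv : G.dist x v = 3) (hB : Bset G x v = Bset G x y) :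
    v ∈ Delta G x y :=
  ⟨v, ⟨hxv, hB⟩, by rw [G.dist_self, add_zero]⟩

theorem dist_le_three_of_mem_Delta (hv : v ∈ Delta G x y) : G.dist x v ≤ 3 := by
  obtain ⟨z, ⟨hxz, -⟩, hvz⟩ := hv
  omega

theorem exists_dist_add_of_mem_Delta (hv : v ∈ Delta G x y) :
    ∃ z, G.dist x z = 3 ∧ Bset G x z = Bset G x y ∧ G.dist x v + G.dist v z = 3 := by
  obtain ⟨z, ⟨hxz, hB⟩, hvz⟩ := hv
  exact ⟨z, hxz, hB, hvz.trans hxz⟩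

theorem Bset_eq_of_mem_Delta (hG : G.Connected) (hv : v ∈ Delta G x y) (hxv : G.dist x v = 3) :
    Bset G x v = Bset G x y := by
  obtain ⟨z, -, hB, hvz⟩ := exists_dist_add_of_mem_Delta hv
  have hvz₀ : G.dist v z = 0 := by omega
  rwa [hG.dist_eq_zero_iff.1 hvz₀]

theorem mem_Delta_of_dist_add_one_eq (hG : G.Connected) (hv : v ∈ Delta G x y)
    (hvu : G.dist v u = 1) (hxu : G.dist x u + 1 = G.dist x v) : u ∈ Delta G x y := by
  obtain ⟨z, hz, hvz⟩ := hv
  have := dist_triangle_bounds hG x u z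
  have := dist_triangle_bounds hG u v z
  exact ⟨z, hz, by omega⟩

theorem dist_eq_add_one_of_mem_Bset (hG : G.Connected) (hv : v ∈ Delta G x y)
    (hw : w ∈ Bset G x y) : G.dist w v = G.dist x v + 1 := by
  obtain ⟨z, hxz, hB, hvz⟩ := exists_dist_add_of_mem_Delta hv
  rw [← hB, mem_Bset_iff hxz] at hw
  have := dist_triangle_bounds hG w v z
  have := dist_triangle_bounds hG w x v
  omega

namespace IsBalancedTriangleFree

variable [Fintype V]

theorem mem_Delta_of_dist_le (hG : IsBalancedTriangleFree G D p q m) (hv : v ∈ Delta G x y)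
    (hvw : G.dist v w = 1) (hxw : G.dist x w ≤ G.dist x v) : w ∈ Delta G x y := by
  have := dist_le_three_of_mem_Delta hv
  have := hG.dist_bounds x v w
  obtain hdown | ⟨hxw₂, hxv₂⟩ | ⟨hxw₃, hxv₃⟩ : G.dist x w + 1 = G.dist x v ∨
      (G.dist x w = 2 ∧ G.dist x v = 2) ∨ (G.dist x w = 3 ∧ G.dist x v = 3) := by omega
  · exact mem_Delta_of_dist_add_one_eq hG.connected hv hvw hdown
  · obtain ⟨z, hxz, hBz, hvz⟩ := exists_dist_add_of_mem_Delta hv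
    obtain ⟨t, hwt, hxt, hBt⟩ := hG.exists_adj_Bset_eq hxv₂ hxw₂ hvw (by omega) hxz
    exact mem_Delta_of_dist_add_one_eq hG.connected (mem_Delta_of_Bset_eq hxt (hBt.trans hBz))
      (G.dist_comm.trans hwt) (by omega)
  · exact mem_Delta_of_Bset_eq hxw₃
      ((hG.Bset_eq_of_adj hxv₃ hxw₃ hvw).symm.trans (Bset_eq_of_mem_Delta hG.connected hv hxv₃))

theorem mem_Delta_of_pentagon_zero (hG : IsBalancedTriangleFree G D p q m) (hv : v ∈ Delta G x y)
    (hxv : G.dist x v = 2) (hxu : G.dist x u = 1) (huv : G.dist u v = 2) : u ∈ Delta G x y := by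
  obtain ⟨r, hur, hrv⟩ := hG.exists_common_neighbor huv
  have := hG.dist_bounds x u r
  have := hG.dist_bounds x r v
  have hr : r ∈ Delta G x y := hG.mem_Delta_of_dist_le hv (by omega) (by omega)
  exact hG.mem_Delta_of_dist_le hr (by omega) (by omega)

theorem mem_Delta_of_pentagon_one_one (hG : IsBalancedTriangleFree G D p q m)
    (ht : t ∈ Delta G x y) (hst : G.dist s t = 1) (hxs : G.dist x s = 1)
    (hxt : G.dist x t = 2) (htv : G.dist t v = 1) (hxv : G.dist x v = 1)
    (hsu : G.dist s u = 1) (hxu : G.dist x u = 2) (huv : G.dist u v = 2) : u ∈ Delta G x y := by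
  obtain ⟨r, hur, hrv⟩ := hG.exists_common_neighbor huv
  have hsv : G.dist s v = 2 := by
    have := hG.dist_bounds s t v
    have := hG.dist_bounds x t v
    have := hG.dist_bounds s u v
    omega
  have htu : G.dist t u = 2 := by
    have := hG.dist_bounds t u v
    have := hG.dist_bounds s t u
    omega
  have hsr : G.dist s r = 2 := by
    have := hG.dist_bounds s u r
    have := hG.dist_bounds s v r
    omega
  have htr : G.dist t r = 2 := by
    have := hG.dist_bounds t v r
    have := hG.dist_bounds t u r
    omega
  have hxr : G.dist x r = 2 := by
    have := hG.dist_bounds x v r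
    have := hG.dist_bounds x u r
    omega
  obtain ⟨e, hte, hre, hxe⟩ := hG.exists_common_neighbor_not_common htr
    (G.dist_comm.trans hxt) (G.dist_comm.trans hst) hxs (by have := hG.dist_bounds s r t; omega)
  have hxe_ne : G.dist x e ≠ 3 := fun hxe₃ ↦ by
    have := hG.dist_bounds s t e
    have := hG.dist_bounds s r e
    have := hG.parallelogramFree_two x s e r hxs (by omega) (by omega) hsr hxe₃
    omega
  have := hG.dist_bounds x t e
  have he : e ∈ Delta G x y := hG.mem_Delta_of_dist_le ht hte (by omega)
  have hr : r ∈ Delta G x y := hG.mem_Delta_of_dist_le he (G.dist_comm.trans hre) (by omega)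
  exact hG.mem_Delta_of_dist_le hr (G.dist_comm.trans hur) (by omega)

theorem mem_Delta_of_pentagon_one_two (hG : IsBalancedTriangleFree G D p q m) (hv : v ∈ Delta G x y)
    (hxs : G.dist x s = 1) (hxv : G.dist x v = 2) (hsv : G.dist s v = 2) (hsu : G.dist s u = 1)
    (hxu : G.dist x u = 2) (huv : G.dist u v = 2) : u ∈ Delta G x y := by
  have := hG.dist_bounds x s u
  have := hG.dist_bounds s u v
  obtain ⟨r, hur, hvr, hxr⟩ := hG.exists_common_neighbor_not_common (s := u) (t := v) (u := u)
    (v := x) (e := s) (by omega) (by omega) (by omega) (by omega) (by omega)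
  have := hG.dist_bounds x v r
  have := hG.dist_bounds x u r
  have := hG.dist_bounds s u r
  have := hG.dist_bounds s v r
  have hxr_ne : G.dist x r ≠ 3 := fun hxr ↦ by
    have := hG.parallelogramFree_two x s r v hxs (by omega) (by omega) hsv hxr
    omega
  have hr : r ∈ Delta G x y := hG.mem_Delta_of_dist_le hv hvr (by omega)
  exact hG.mem_Delta_of_dist_le hr (by omega) (by omega)

theorem mem_Delta_of_pentagon_one_three (hG : IsBalancedTriangleFree G D p q m)
    (hv : v ∈ Delta G x y) (hxs : G.dist x s = 1) (hxv : G.dist x v = 3) (hsv : G.dist s v = 2)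
    (hsu : G.dist s u = 1) (hxu : G.dist x u = 2) (huv : G.dist u v = 2) : u ∈ Delta G x y := by
  obtain ⟨r, hur, hrv⟩ := hG.exists_common_neighbor huv
  have := hG.dist_bounds x v r
  have := hG.dist_bounds s u r
  have := hG.dist_bounds s v r
  have hxr := hG.parallelogramFree_two x s v r hxs (by omega) hsv (by omega) hxv
  have hr : r ∈ Delta G x y := hG.mem_Delta_of_dist_le hv (by omega) (by omega)
  have := hG.dist_bounds x u r
  exact hG.mem_Delta_of_dist_le hr (by omega) (by omega)

theorem mem_Delta_of_pentagon_one (hG : IsBalancedTriangleFree G D p q m)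
    (hs : s ∈ Delta G x y) (ht : t ∈ Delta G x y) (hv : v ∈ Delta G x y) (hst : G.dist s t = 1)
    (hxs : G.dist x s = 1) (hxt : G.dist x t = 2) (htv : G.dist t v = 1) (hsu : G.dist s u = 1)
    (huv : G.dist u v = 2) : u ∈ Delta G x y := by
  have := hG.dist_bounds x s u
  by_cases hle : G.dist x u ≤ G.dist x s
  · exact hG.mem_Delta_of_dist_le hs hsu hle
  have := hG.dist_bounds x t v
  have := hG.dist_bounds s t v
  have := hG.dist_bounds s u v
  have hxu : G.dist x u = 2 := by omega
  obtain hxv | ⟨hxv, hsv⟩ | ⟨hxv, hsv⟩ : G.dist x v = 1 ∨ (G.dist x v = 2 ∧ G.dist s v = 2) ∨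
      (G.dist x v = 3 ∧ G.dist s v = 2) := by omega
  · exact hG.mem_Delta_of_pentagon_one_one ht hst hxs hxt htv hxv hsu hxu huv
  · exact hG.mem_Delta_of_pentagon_one_two hv hxs hxv hsv hsu hxu huv
  · exact hG.mem_Delta_of_pentagon_one_three hv hxs hxv hsv hsu hxu huv

end IsBalancedTriangleFree

end Delta

section ExceptionalPentagon

variable [Fintype V] {G : SimpleGraph V} {D : ℕ} {p : ℕ → ℕ → ℕ → ℕ} {q m : ℝ}
  {x y a e s t u v w : V}

/-- Vertices `s, t, v` of `Δ` and `u` outside `Δ` which, with a common neighbour of `u` and `v`,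
form a pentagon whose edge `s t` goes from distance `2` to distance `3` from `x`. -/
structure IsExceptionalPentagon (G : SimpleGraph V) (x y s t u v : V) : Prop where
  dist_xy : G.dist x y = 3
  mem_s : s ∈ Delta G x y
  mem_t : t ∈ Delta G x y
  mem_v : v ∈ Delta G x y
  notMem_u : u ∉ Delta G x y
  dist_st : G.dist s t = 1
  dist_tv : G.dist t v = 1
  dist_su : G.dist s u = 1
  dist_uv : G.dist u v = 2
  dist_xs : G.dist x s = 2
  dist_xt : G.dist x t = 3
  dist_xu : G.dist x u = 3

namespace IsBalancedTriangleFree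

theorem dist_eq_four_of_adj (hG : IsBalancedTriangleFree G D p q m) (hxs : G.dist x s = 2)
    (hsa : G.dist s a = 2) (hse : G.dist s e = 2) (hae : G.dist a e = 1) (hxa : G.dist x a = 4) :
    G.dist x e = 4 := by
  obtain ⟨r, hxr, hrs⟩ := hG.exists_common_neighbor hxs
  have := hG.dist_bounds x r a
  have := hG.dist_bounds r s a
  have hra : G.dist r a = 3 := by omega
  have hre := hG.parallelogramFree_two r s a e hrs hae hsa hse hra
  exact hG.parallelogramFree_three x r a e hxr hae hra hre hxa

theorem exists_adj_of_pentagon (hG : IsBalancedTriangleFree G D p q m) (htu : G.dist t u = 2)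
    (hua : G.dist u a = 1) (hta : G.dist t a = 2) :
    ∃ r, G.dist a r = 1 ∧ G.dist t r = 1 ∧ G.dist u r = 2 := by
  obtain ⟨r, htr, hra⟩ := hG.exists_common_neighbor hta
  have := hG.dist_bounds u a r
  have := hG.dist_bounds u t r
  exact ⟨r, by omega, htr, by omega⟩

end IsBalancedTriangleFree

namespace IsExceptionalPentagon

theorem dist_sv (h : IsExceptionalPentagon G x y s t u v)
    (hG : IsBalancedTriangleFree G D p q m) : G.dist s v = 2 := by
  have := hG.dist_bounds s t v
  have := hG.dist_bounds s u v
  have := h.dist_st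
  have := h.dist_tv
  have := h.dist_su
  have := h.dist_uv
  omega

theorem dist_tu (h : IsExceptionalPentagon G x y s t u v)
    (hG : IsBalancedTriangleFree G D p q m) : G.dist t u = 2 := by
  have := hG.dist_bounds s t u
  have := hG.dist_bounds t u v
  have := h.dist_st
  have := h.dist_tv
  have := h.dist_su
  have := h.dist_uv
  omega

theorem dist_s_eq_two_of_adj_t (h : IsExceptionalPentagon G x y s t u v)
    (hG : IsBalancedTriangleFree G D p q m)
    (hta : G.dist t a = 1) (hua : G.dist u a = 2) :
    G.dist s a = 2 := by
  have := hG.dist_bounds s t a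
  have := hG.dist_bounds s u a
  have := h.dist_st
  have := h.dist_su
  omega

theorem dist_s_eq_two_of_adj_u (h : IsExceptionalPentagon G x y s t u v)
    (hG : IsBalancedTriangleFree G D p q m)
    (hua : G.dist u a = 1) (hta : G.dist t a = 2) :
    G.dist s a = 2 := by
  have := hG.dist_bounds s t a
  have := hG.dist_bounds s u a
  have := h.dist_st
  have := h.dist_su
  omega

theorem exists_adj_dist_ne_four
    (h : IsExceptionalPentagon G x y s t u v) (hG : IsBalancedTriangleFree G D p q m) :
    ∃ r, G.dist u r = 1 ∧ G.dist s r = 2 ∧ G.dist t r = 2 ∧ G.dist x r ≠ 4 := by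
  obtain ⟨r, hur, hrv⟩ := hG.exists_common_neighbor h.dist_uv
  have hsv := h.dist_sv hG
  have htu := h.dist_tu hG
  have htr : G.dist t r = 2 := by
    have := hG.dist_bounds t v r
    have := hG.dist_bounds t u r
    have := h.dist_tv
    omega
  have hsr := h.dist_s_eq_two_of_adj_u hG hur htr
  refine ⟨r, hur, hsr, htr, fun hxr ↦ ?_⟩
  have := hG.dist_eq_four_of_adj h.dist_xs hsr hsv hrv hxr
  have := dist_le_three_of_mem_Delta h.mem_v
  omega

theorem dist_ne_four_of_adj_t (h : IsExceptionalPentagon G x y s t u v)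
    (hG : IsBalancedTriangleFree G D p q m)
    (hta : G.dist t a = 1) (hua : G.dist u a = 2) :
    G.dist x a ≠ 4 := by
  intro hxa
  have hsa := h.dist_s_eq_two_of_adj_t hG hta hua
  have htu := h.dist_tu hG
  obtain ⟨r, hur, hsr, htr, hxr⟩ := h.exists_adj_dist_ne_four hG
  have := hG.dist_bounds t r a
  have hra_ne : G.dist r a ≠ 3 := fun hra ↦ by
    have := hG.parallelogramFree_two r u a t (G.dist_comm.trans hur) (G.dist_comm.trans hta) hua
      (G.dist_comm.trans htu) hra
    omega
  obtain hra | har : G.dist r a = 1 ∨ G.dist a r = 2 := by omega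
  · exact hxr (hG.dist_eq_four_of_adj h.dist_xs hsa hsr (G.dist_comm.trans hra) hxa)
  obtain ⟨e, hae, hre, hsae⟩ := hG.exists_common_neighbor_not_common har
    (G.dist_comm.trans hsa) (G.dist_comm.trans hta) h.dist_st
    (by have := hG.dist_bounds t r a; omega)
  have hse_ne : G.dist s e ≠ 3 := fun hse ↦ by
    have := hG.dist_bounds t a e
    have := hG.dist_bounds t r e
    have := hG.dist_bounds s t e
    have := h.dist_st
    have := hG.parallelogramFree_two s t e r (by omega) (by omega) (by omega) htr hse
    omega
  have hse : G.dist s e = 2 := by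
    have := hG.dist_bounds s a e
    omega
  have hxe := hG.dist_eq_four_of_adj h.dist_xs hsa hse hae hxa
  exact hxr (hG.dist_eq_four_of_adj h.dist_xs hse hsr (G.dist_comm.trans hre) hxe)

theorem dist_ne_four_of_adj_u (h : IsExceptionalPentagon G x y s t u v)
    (hG : IsBalancedTriangleFree G D p q m)
    (hua : G.dist u a = 1) (hta : G.dist t a = 2) : G.dist x a ≠ 4 := by
  intro hxa
  obtain ⟨r, har, htr, hur⟩ := hG.exists_adj_of_pentagon (h.dist_tu hG) hua hta
  exact h.dist_ne_four_of_adj_t hG htr hur (hG.dist_eq_four_of_adj h.dist_xs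
    (h.dist_s_eq_two_of_adj_u hG hua hta) (h.dist_s_eq_two_of_adj_t hG htr hur) har hxa)

theorem mem_Delta_of_adj_t (h : IsExceptionalPentagon G x y s t u v)
    (hG : IsBalancedTriangleFree G D p q m)
    (hta : G.dist t a = 1) (hua : G.dist u a = 2) : a ∈ Delta G x y := by
  have := h.dist_ne_four_of_adj_t hG hta hua
  have := hG.dist_bounds x t a
  have := h.dist_xt
  exact hG.mem_Delta_of_dist_le h.mem_t hta (by omega)

theorem mem_Delta_of_adj_u (h : IsExceptionalPentagon G x y s t u v)
    (hG : IsBalancedTriangleFree G D p q m)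
    (hua : G.dist u a = 1) (hta : G.dist t a = 2)
    (hxa : ∀ r, G.dist a r = 1 → G.dist t r = 1 → G.dist u r = 2 → G.dist x a ≤ G.dist x r) :
    a ∈ Delta G x y := by
  obtain ⟨r, har, htr, hur⟩ := hG.exists_adj_of_pentagon (h.dist_tu hG) hua hta
  exact hG.mem_Delta_of_dist_le (h.mem_Delta_of_adj_t hG htr hur) (G.dist_comm.trans har)
    (hxa r har htr hur)

theorem dist_w_eq_three_or_four (h : IsExceptionalPentagon G x y s t u v)
    (hG : IsBalancedTriangleFree G D p q m)
    (hw : w ∈ Bset G x y) (hta : G.dist t a = 1) (hua : G.dist u a = 2) :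
    G.dist w a = 3 ∨ G.dist w a = 3 + 1 := by
  have ha := h.mem_Delta_of_adj_t hG hta hua
  have := dist_eq_add_one_of_mem_Bset hG.connected ha hw
  have := dist_le_three_of_mem_Delta ha
  have := hG.dist_bounds x t a
  have := h.dist_xt
  omega

theorem dist_w_eq_three (h : IsExceptionalPentagon G x y s t u v)
    (hG : IsBalancedTriangleFree G D p q m)
    (hw : w ∈ Bset G x y) (hwu : w ∉ Bset G x u) (hua : G.dist u a = 1) (hta : G.dist t a = 2) :
    G.dist w a = 3 := by
  have := h.dist_xu
  have := h.dist_xt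
  have := hG.dist_bounds x u a
  have := h.dist_ne_four_of_adj_u hG hua hta
  obtain hxa | hxa : G.dist x a = 2 ∨ G.dist x a = 3 := by omega
  · have ha : a ∈ Delta G x y := h.mem_Delta_of_adj_u hG hua hta fun r _ htr _ ↦ by
      have := hG.dist_bounds x t r
      omega
    rw [dist_eq_add_one_of_mem_Bset hG.connected ha hw, hxa]
  · rw [← hG.Bset_eq_of_adj hxa h.dist_xu (G.dist_comm.trans hua), mem_Bset_iff hxa] at hwu
    have hwt := dist_eq_add_one_of_mem_Bset hG.connected h.mem_t hw
    have hws := dist_eq_add_one_of_mem_Bset hG.connected h.mem_s hw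
    rw [h.dist_xt] at hwt
    rw [h.dist_xs] at hws
    have hsa := h.dist_s_eq_two_of_adj_u hG hua hta
    have := hG.dist_ne_two_of_dist_eq_two hwt hws h.dist_st (G.dist_comm.trans hsa)
      (G.dist_comm.trans hta)
    have := hw.1
    have := hG.dist_bounds x w a
    omega

theorem exists_factor_mul_eq (h : IsExceptionalPentagon G x y s t u v)
    (hG : IsBalancedTriangleFree G D p q m) (hw : w ∈ Bset G x y) (hwu : w ∉ Bset G x u) :
    ∃ N : ℕ, m * (q ^ 4 - q ^ G.dist w u) = N * (q ^ 4 - q ^ 3) ∧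
      (N = p 2 1 2 → ∀ a, G.dist t a = 1 → G.dist u a = 2 → G.dist w a = 4) := by
  have htu := h.dist_tu hG
  have hut := G.dist_comm.trans htu
  have hwt := dist_eq_add_one_of_mem_Bset hG.connected h.mem_t hw
  obtain ⟨N, hN, hNa⟩ := hG.exists_balanceSum_eq (q := q) hG.one_le_diam htu
    fun a ↦ h.dist_w_eq_three_or_four hG hw
  have hbal := hG.isBalanced w u t hut
  rw [hN, hG.balanceSum_eq hG.one_le_diam hut fun a ↦ h.dist_w_eq_three hG hw hwu, hwt,
    h.dist_xt] at hbal
  exact ⟨N, by linear_combination -hbal, hNa⟩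

theorem dist_wu_eq_two (h : IsExceptionalPentagon G x y s t u v)
    (hG : IsBalancedTriangleFree G D p q m) (hw : w ∈ Bset G x y) (hwu : w ∉ Bset G x u) :
    G.dist w u = 2 := by
  have hwu_ne_three : G.dist w u ≠ 3 := fun hwu₃ ↦ by
    obtain ⟨N, hN, -⟩ := h.exists_factor_mul_eq hG hw hwu
    rw [hwu₃] at hN
    exact hG.factor_ne_natCast N <| mul_right_cancel₀ (hG.pow_mul_sub_one_ne_zero 3) <| by
      linear_combination hN
  have hxw := hw.1
  rw [mem_Bset_iff h.dist_xu] at hwu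
  have := hG.dist_bounds x w u
  have := h.dist_xu
  omega

theorem dist_w_eq_four (h : IsExceptionalPentagon G x y s t u v)
    (hG : IsBalancedTriangleFree G D p q m) (hw : w ∈ Bset G x y) (hwu : w ∉ Bset G x u)
    (hta : G.dist t a = 1) (hua : G.dist u a = 2) : G.dist w a = 4 := by
  obtain ⟨N, hN, hNa⟩ := h.exists_factor_mul_eq hG hw hwu
  rw [h.dist_wu_eq_two hG hw hwu] at hN
  have hm := hG.factor_mul_one_add (by linarith [hG.four_le]) hG.q_ne_one hG.isBalanced
  have hN_eq : (N : ℝ) = p 2 1 2 := mul_right_cancel₀ (hG.pow_mul_sub_one_ne_zero 3) <| by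
    linear_combination q ^ 2 * (q - 1) * hm - hN
  exact hNa (mod_cast hN_eq) a hta hua

theorem mem_Bset (h : IsExceptionalPentagon G x y s t u v)
    (hG : IsBalancedTriangleFree G D p q m) (hw : w ∈ Bset G x y) : w ∈ Bset G x u := by
  by_contra hwu
  have hxa_t (a : V) (hta : G.dist t a = 1) (hua : G.dist u a = 2) : G.dist x a = 3 := by
    have := dist_eq_add_one_of_mem_Bset hG.connected (h.mem_Delta_of_adj_t hG hta hua) hw
    have := h.dist_w_eq_four hG hw hwu hta hua
    omega
  have hxa_u (a : V) (hua : G.dist u a = 1) (hta : G.dist t a = 2) : G.dist x a = 2 := by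
    have := hG.dist_bounds x u a
    have := h.dist_xu
    have := h.dist_ne_four_of_adj_u hG hua hta
    have ha := h.mem_Delta_of_adj_u hG hua hta fun r _ htr hur ↦ by
      rw [hxa_t r htr hur]
      omega
    have := dist_eq_add_one_of_mem_Bset hG.connected ha hw
    have := h.dist_w_eq_three hG hw hwu hua hta
    omega
  have htu := h.dist_tu hG
  have hut := G.dist_comm.trans htu
  have hbal := hG.isBalanced x u t hut
  rw [hG.balanceSum_eq hG.one_le_diam htu hxa_t, hG.balanceSum_eq hG.one_le_diam hut hxa_u,
    h.dist_xt, h.dist_xu] at hbal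
  refine mul_ne_zero (Nat.cast_ne_zero (R := ℝ).2 hG.a_two) (hG.pow_mul_sub_one_ne_zero 2) ?_
  linear_combination hbal

end IsExceptionalPentagon

theorem IsBalancedTriangleFree.not_isExceptionalPentagon (hG : IsBalancedTriangleFree G D p q m) :
    ¬IsExceptionalPentagon G x y s t u v := fun h ↦
  h.notMem_u <| mem_Delta_of_Bset_eq h.dist_xu <| .symm <|
    hG.Bset_eq_of_subset h.dist_xy h.dist_xu fun _ ↦ h.mem_Bset hG

end ExceptionalPentagon

section Valency

variable [Fintype V] {G : SimpleGraph V} {D : ℕ} {p : ℕ → ℕ → ℕ → ℕ} {q m : ℝ} {x y s t u v : V}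

namespace IsBalancedTriangleFree

theorem mem_Delta_of_pentagon (hG : IsBalancedTriangleFree G D p q m) (hxy : G.dist x y = 3)
    (hs : s ∈ Delta G x y) (ht : t ∈ Delta G x y) (hv : v ∈ Delta G x y) (hst : G.dist s t = 1)
    (hxt : G.dist x t = G.dist x s + 1) (htv : G.dist t v = 1) (hsu : G.dist s u = 1)
    (huv : G.dist u v = 2) : u ∈ Delta G x y := by
  have := dist_le_three_of_mem_Delta ht
  obtain hxs | hxs | hxs : G.dist x s = 0 ∨ G.dist x s = 1 ∨ G.dist x s = 2 := by omega
  · obtain rfl := hG.connected.dist_eq_zero_iff.1 hxs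
    have := hG.dist_bounds x t v
    have := hG.dist_bounds x u v
    exact hG.mem_Delta_of_pentagon_zero hv (by omega) hsu huv
  · exact hG.mem_Delta_of_pentagon_one hs ht hv hst hxs (by omega) htv hsu huv
  · by_cases hle : G.dist x u ≤ G.dist x s
    · exact hG.mem_Delta_of_dist_le hs hsu hle
    have := hG.dist_bounds x s u
    by_contra hu
    exact hG.not_isExceptionalPentagon
      ⟨hxy, hs, ht, hv, hu, hst, htv, hsu, huv, hxs, by omega, by omega⟩

theorem dist_eq_two_of_notMem_Delta (hG : IsBalancedTriangleFree G D p q m)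
    (ht : t ∈ Delta G x y) (hst : G.dist s t = 1) (hsu : G.dist s u = 1) (hu : u ∉ Delta G x y) :
    G.dist t u = 2 := by
  have htu : G.dist t u ≠ 0 := fun htu ↦ hu (hG.connected.dist_eq_zero_iff.1 htu ▸ ht)
  have := hG.dist_bounds s t u
  omega

theorem ncard_neighbors_diff_Delta_le (hG : IsBalancedTriangleFree G D p q m)
    (hxy : G.dist x y = 3) (hs : s ∈ Delta G x y) (ht : t ∈ Delta G x y) (hst : G.dist s t = 1)
    (hxt : G.dist x t = G.dist x s + 1) :
    ({v | G.dist s v = 1} \ Delta G x y).ncard ≤ ({v | G.dist t v = 1} \ Delta G x y).ncard := by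
  classical
  rw [Set.ncard_eq_toFinset_card', Set.ncard_eq_toFinset_card']
  refine Nat.le_of_mul_le_mul_right ?_ (Nat.pos_of_ne_zero hG.a_two)
  have hcard {r r' : V} (h : G.dist r r' = 2) := hG.card_filter (i := 1) (j := 2)
    hG.one_le_diam (by linarith [hG.four_le]) h
  refine card_mul_le_card_mul (fun u v ↦ G.dist u v = 2) (fun u hu ↦ ?_) fun v hv ↦ ?_
  · rw [Set.mem_toFinset] at hu
    rw [← hcard (hG.dist_eq_two_of_notMem_Delta ht hst hu.1 hu.2)]
    refine card_le_card fun v hv ↦ ?_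
    obtain ⟨htv, huv⟩ := (mem_filter_univ v).1 hv
    rw [mem_bipartiteAbove, Set.mem_toFinset]
    exact ⟨⟨htv, fun hvΔ ↦ hu.2
      (hG.mem_Delta_of_pentagon hxy hs ht hvΔ hst hxt htv hu.1 huv)⟩, huv⟩
  · rw [Set.mem_toFinset] at hv
    rw [← hcard (hG.dist_eq_two_of_notMem_Delta hs (G.dist_comm.trans hst) hv.1 hv.2)]
    refine card_le_card fun u hu ↦ ?_
    rw [mem_bipartiteBelow, Set.mem_toFinset] at hu
    exact (mem_filter_univ u).2 ⟨hu.1.1, G.dist_comm.trans hu.2⟩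

theorem ncard_neighbors_inter_Delta_le (hG : IsBalancedTriangleFree G D p q m)
    (hxy : G.dist x y = 3) (hs : s ∈ Delta G x y) (ht : t ∈ Delta G x y) (hst : G.dist s t = 1)
    (hxt : G.dist x t = G.dist x s + 1) :
    ({v | G.dist t v = 1} ∩ Delta G x y).ncard ≤ ({v | G.dist s v = 1} ∩ Delta G x y).ncard := by
  have hsplit (r : V) : ({v | G.dist r v = 1} ∩ Delta G x y).ncard +
      ({v | G.dist r v = 1} \ Delta G x y).ncard = p 0 1 1 := by
    classical
    rw [Set.ncard_inter_add_ncard_sdiff_eq_ncard _ _ (Set.toFinite _),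
      ← hG.card_neighbors hG.one_le_diam r, Set.ncard_eq_toFinset_card', Set.toFinset_ofPred]
  have := hsplit s
  have := hsplit t
  have := hG.ncard_neighbors_diff_Delta_le hxy hs ht hst hxt
  omega

theorem ncard_neighbors_three_or_two (hG : IsBalancedTriangleFree G D p q m)
    (hxy : G.dist x y = 3) :
    {v | G.dist x v = 1 ∧ (G.dist y v = 3 ∨ G.dist y v = 2)}.ncard = p 3 1 3 + p 3 1 2 := by
  have hD := hG.four_le
  rw [← hG.isDistRegularWith 3 1 3 (by omega) (by omega) (by omega) x y hxy,
    ← hG.isDistRegularWith 3 1 2 (by omega) (by omega) (by omega) x y hxy,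
    ← Set.ncard_union_eq ?_ (Set.toFinite _) (Set.toFinite _)]
  · simp only [and_or_left, Set.ofPred_or]
  · refine Set.disjoint_left.2 fun v hv₃ hv₂ ↦ ?_
    have : (3 : ℕ) = 2 := hv₃.2.symm.trans hv₂.2
    omega

theorem le_ncard_neighbors_inter_Delta (hG : IsBalancedTriangleFree G D p q m)
    (hv : v ∈ Delta G x y) (hxv : G.dist x v = 3) :
    p 3 1 3 + p 3 1 2 ≤ ({w | G.dist v w = 1} ∩ Delta G x y).ncard := by
  rw [← hG.ncard_neighbors_three_or_two (G.dist_comm.trans hxv)]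
  exact Set.ncard_le_ncard
    (fun w hw ↦ ⟨hw.1, hG.mem_Delta_of_dist_le hv hw.1 (by have := hw.2; omega)⟩) (Set.toFinite _)

theorem ncard_base_neighbors_inter_Delta_le (hG : IsBalancedTriangleFree G D p q m)
    (hxy : G.dist x y = 3) :
    ({w | G.dist x w = 1} ∩ Delta G x y).ncard ≤ p 3 1 3 + p 3 1 2 := by
  rw [← hG.ncard_neighbors_three_or_two hxy]
  refine Set.ncard_le_ncard (fun w hw ↦ ⟨hw.1, ?_⟩) (Set.toFinite _)
  have hxw : G.dist x w = 1 := hw.1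
  have := hG.dist_bounds x y w
  have hyw : G.dist y w ≠ 4 := fun hyw ↦ by
    have := dist_eq_add_one_of_mem_Bset hG.connected hw.2 ((mem_Bset_iff hxy).2 ⟨hxw, hyw⟩)
    rw [G.dist_self, hxw] at this
    omega
  omega

end IsBalancedTriangleFree

end Valency

/-- Classical parameters `(D, b, α, β)`, `D ≥ 4`, `a₁ = 0`, `a₂ ≠ 0`,
`∂(x,y) = 3`, `Δ = [x, C]`. Let `x = x₀, x₁, x₂, x₃` be a sequence of vertices in `Δ`
with `∂(x, x_j) = j` and `∂(x_{j-1}, x_j) = 1` for `1 ≤ j ≤ 3`. Then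
`|Γ₁(x_i) ∩ Δ| ≥ |Γ₁(x_{i+1}) ∩ Δ|` for `0 ≤ i ≤ 2`, and consequently
`|Γ₁(x_i) ∩ Δ| = a₃ + c₃` (`= p³₁₃ + p³₁₂`) for `0 ≤ i ≤ 3`. -/
theorem Delta_valency_along_path [Fintype V] (G : SimpleGraph V) (hconn : G.Connected)
    (D : ℕ) (hD : 4 ≤ D)
    (hdiam_le : ∀ x y : V, G.dist x y ≤ D) (hdiam : ∃ x y : V, G.dist x y = D)
    (p : ℕ → ℕ → ℕ → ℕ) (hdr : G.IsDistRegularWith D p)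
    (b α β : ℝ) (hcp : HasClassicalParams D p b α β)
    (ha1 : p 1 1 1 = 0) (ha2 : p 2 1 2 ≠ 0)
    (x y : V) (hxy : G.dist x y = 3)
    (xs : ℕ → V) (hxs0 : xs 0 = x)
    (hxsΔ : ∀ j ≤ 3, xs j ∈ Delta G x y)
    (hxsd : ∀ j ≤ 3, G.dist x (xs j) = j)
    (hxsadj : ∀ j, 1 ≤ j → j ≤ 3 → G.dist (xs (j - 1)) (xs j) = 1) :
    (∀ i ≤ 2, ({v : V | G.dist (xs (i + 1)) v = 1} ∩ Delta G x y).ncard ≤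
      ({v : V | G.dist (xs i) v = 1} ∩ Delta G x y).ncard) ∧
    (∀ i ≤ 3, ({v : V | G.dist (xs i) v = 1} ∩ Delta G x y).ncard = p 3 1 3 + p 3 1 2) := by
  obtain ⟨m, hG⟩ := hcp.exists_isBalancedTriangleFree ⟨hconn, hdiam_le, hdiam, hdr⟩ hD ha1 ha2
  have hmono (i) (hi : i ≤ 2) : ({v : V | G.dist (xs (i + 1)) v = 1} ∩ Delta G x y).ncard ≤
      ({v : V | G.dist (xs i) v = 1} ∩ Delta G x y).ncard :=
    hG.ncard_neighbors_inter_Delta_le hxy (hxsΔ i (by omega)) (hxsΔ (i + 1) (by omega))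
      (hxsadj (i + 1) (by omega) (by omega))
      (by rw [hxsd i (by omega), hxsd (i + 1) (by omega)])
  have hlower := hG.le_ncard_neighbors_inter_Delta (hxsΔ 3 le_rfl) (hxsd 3 le_rfl)
  have hupper : ({v : V | G.dist (xs 0) v = 1} ∩ Delta G x y).ncard ≤ p 3 1 3 + p 3 1 2 := by
    rw [hxs0]
    exact hG.ncard_base_neighbors_inter_Delta_le hxy
  have h₀ := hmono 0 (by omega)
  have h₁ := hmono 1 (by omega)
  have h₂ := hmono 2 le_rfl
  simp only [zero_add, Nat.reduceAdd] at h₀ h₁ h₂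
  exact ⟨hmono, fun i hi ↦ by interval_cases i <;> omega⟩
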